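/- arXiv:1501.00721 — 7 statements merged into one kernel-verified Lean document; each statement's English description precedes it below -/
import Mathlib

section
/- Let O be a finite family of bounded nonempty objects in ℝ^d with density ρ ≥ 1. Then the intersection graph of O is (ρ−1)-degenerate: every nonempty induced subgraph of the intersection graph has a vertex of degree at most ρ−1. -/
/-- A finite family `O` of subsets of `ℝ^d` has density at most `ρ` if every bounded
subset `b` of `ℝ^d` intersects at most `ρ` members of `O` whose diameter is at least
the diameter of `b`. -/
def FamilyDensityLE (d : ℕ) (O : Set (Set (EuclideanSpace ℝ (Fin d)))) (ρ : ℝ) : Prop :=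
  ∀ b : Set (EuclideanSpace ℝ (Fin d)), Bornology.IsBounded b →
    ({o ∈ O | (o ∩ b).Nonempty ∧ Metric.diam b ≤ Metric.diam o}.ncard : ℝ) ≤ ρ

/-- The intersection graph of a family of objects: vertices are the members of the family,
with an edge between two distinct objects iff they intersect. -/
def InterGraph {d : ℕ} (O : Set (Set (EuclideanSpace ℝ (Fin d)))) : SimpleGraph O :=
  SimpleGraph.fromRel fun o o' => ((o : Set (EuclideanSpace ℝ (Fin d))) ∩ o').Nonempty

/-- the intersection graph of a finite family of bounded nonempty objects
of density `ρ ≥ 1` in `ℝ^d` is `(ρ-1)`-degenerate: every nonempty induced subgraph has a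
vertex of degree at most `ρ - 1`. -/
theorem stmt0 (d : ℕ) (O : Set (Set (EuclideanSpace ℝ (Fin d)))) (hfin : O.Finite)
    (hbdd : ∀ o ∈ O, Bornology.IsBounded o) (hne : ∀ o ∈ O, o.Nonempty)
    (ρ : ℕ) (hρ : 1 ≤ ρ) (hdens : FamilyDensityLE d O (ρ : ℝ)) :
    ∀ S : Set ↥O, S.Nonempty →
      ∃ v ∈ S, ({u ∈ S | (InterGraph O).Adj v u}).ncard ≤ ρ - 1 := by
  intro S hS
  have : Finite ↥O := hfin
  obtain ⟨v, hvS, hmin⟩ := Set.exists_min_image S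
    (fun o : ↥O => Metric.diam (o : Set (EuclideanSpace ℝ (Fin d)))) S.toFinite hS
  refine ⟨v, hvS, ?_⟩
  have h := hdens v (hbdd v v.2)
  have h' := Nat.cast_le.mp h
  have hnot : v ∉ {u ∈ S | (InterGraph O).Adj v u} := fun hv => (InterGraph O).loopless.irrefl v hv.2
  have hc := Set.ncard_insert_of_notMem hnot (Set.toFinite _)
  have hi := Set.ncard_image_of_injective
    (insert v {u ∈ S | (InterGraph O).Adj v u}) (Subtype.val_injective)
  have hle := Set.ncard_le_ncard (s := Subtype.val '' (insert v {u ∈ S | (InterGraph O).Adj v u}))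
    (t := {o ∈ O | (o ∩ (v : Set (EuclideanSpace ℝ (Fin d)))).Nonempty ∧
      Metric.diam (v : Set (EuclideanSpace ℝ (Fin d))) ≤ Metric.diam o}) (by
      rintro _ ⟨u, hu, rfl⟩
      rcases hu with rfl | ⟨huS, hadj⟩
      · exact ⟨u.2, by simpa using hne u u.2, le_rfl⟩
      · refine ⟨u.2, ?_, hmin u huS⟩
        simp only [InterGraph, SimpleGraph.fromRel_adj] at hadj
        rcases hadj.2 with h1 | h1
        · rwa [Set.inter_comm]
        · exact h1) (hfin.subset (fun _ ho => ho.1))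
  have hf := hi.symm.trans_le hle
  omega
end

section
/- Let O be a finite family of bounded nonempty objects in ℝ^d with density ρ, let c_d be a constant such that every ball in ℝ^d of radius s can be covered by c_d balls of radius s/2, and let α ∈ (0,1). Then any ball of radius r in ℝ^d intersects at most ρ·c_d^{⌈log₂(1/α)⌉} objects of O having diameter at least 2rα. -/
theorem stmt2_aux (d : ℕ) (O : Set (Set (EuclideanSpace ℝ (Fin d)))) (hfin : O.Finite)
    (ρ : ℝ) (hρ : 0 ≤ ρ) (hdens : FamilyDensityLE d O ρ)
    (cd : ℕ)
    (hcd : ∀ (x : EuclideanSpace ℝ (Fin d)) (s : ℝ), 0 < s →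
      ∃ T : Finset (EuclideanSpace ℝ (Fin d)), T.card ≤ cd ∧
        Metric.closedBall x s ⊆ ⋃ y ∈ T, Metric.closedBall y (s / 2))
    (D : ℝ) (n : ℕ) : ∀ (p : EuclideanSpace ℝ (Fin d)) (r : ℝ), 0 < r → 2 * r ≤ D * 2 ^ n →
    ({o ∈ O | (o ∩ Metric.closedBall p r).Nonempty ∧ D ≤ Metric.diam o}.ncard : ℝ)
      ≤ ρ * (cd : ℝ) ^ n := by
  induction n with
  | zero =>
    intro p r hr h
    have h1 := hdens (Metric.closedBall p r) Metric.isBounded_closedBall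
    have h2 : Metric.diam (Metric.closedBall p r) ≤ 2 * r := Metric.diam_closedBall hr.le
    simp only [pow_zero, mul_one] at h ⊢
    refine le_trans ?_ h1
    norm_cast
    refine Set.ncard_le_ncard ?_ (hfin.subset (Set.sep_subset _ _))
    rintro o ⟨ho, ho1, ho2⟩
    exact ⟨ho, ho1, by linarith⟩
  | succ n ih =>
    intro p r hr h
    obtain ⟨T, hT, hc⟩ := hcd p r hr
    have hsub : {o ∈ O | (o ∩ Metric.closedBall p r).Nonempty ∧ D ≤ Metric.diam o} ⊆
        ⋃ y ∈ T, {o ∈ O | (o ∩ Metric.closedBall y (r / 2)).Nonempty ∧ D ≤ Metric.diam o} := by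
      rintro o ⟨ho, ⟨x, hx, hxp⟩, hD⟩
      have := hc hxp
      simp only [Set.mem_iUnion, exists_prop] at this ⊢
      obtain ⟨y, hy, hxy⟩ := this
      exact ⟨y, hy, ho, ⟨x, hx, hxy⟩, hD⟩
    have hfin2 : (⋃ y ∈ T, {o ∈ O | (o ∩ Metric.closedBall y (r / 2)).Nonempty ∧
        D ≤ Metric.diam o}).Finite :=
      hfin.subset (Set.iUnion₂_subset fun _ _ => Set.sep_subset _ _)
    have h1 := (Set.ncard_le_ncard hsub hfin2).trans (Finset.set_ncard_biUnion_le T _)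
    have h2 : ({o ∈ O | (o ∩ Metric.closedBall p r).Nonempty ∧ D ≤ Metric.diam o}.ncard : ℝ) ≤
        ∑ y ∈ T, ({o ∈ O | (o ∩ Metric.closedBall y (r / 2)).Nonempty ∧
          D ≤ Metric.diam o}.ncard : ℝ) := by exact_mod_cast h1
    have h3 := Finset.sum_le_card_nsmul T (fun y => ({o ∈ O | (o ∩ Metric.closedBall y
      (r / 2)).Nonempty ∧ D ≤ Metric.diam o}.ncard : ℝ)) (ρ * (cd : ℝ) ^ n)
      (fun y _ => ih y (r / 2) (by linarith) (by rw [pow_succ] at h; linarith))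
    refine h2.trans (h3.trans ?_)
    rw [nsmul_eq_mul]
    have h4 : (T.card : ℝ) ≤ cd := by exact_mod_cast hT
    calc (T.card : ℝ) * (ρ * (cd : ℝ) ^ n) ≤ cd * (ρ * (cd : ℝ) ^ n) := by gcongr
      _ = _ := by ring

/-- if `O` has density `ρ`, `c_d` is such that every ball of radius `s` can be
covered by `c_d` balls of radius `s/2`, and `α ∈ (0,1)`, then any ball of radius `r`
intersects at most `ρ·c_d^{⌈log₂(1/α)⌉}` objects of `O` of diameter at least `2rα`. -/
theorem stmt2 (d : ℕ) (O : Set (Set (EuclideanSpace ℝ (Fin d)))) (hfin : O.Finite)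
    (hbdd : ∀ o ∈ O, Bornology.IsBounded o) (hne : ∀ o ∈ O, o.Nonempty)
    (ρ : ℝ) (hdens : FamilyDensityLE d O ρ)
    (cd : ℕ)
    (hcd : ∀ (x : EuclideanSpace ℝ (Fin d)) (s : ℝ), 0 < s →
      ∃ T : Finset (EuclideanSpace ℝ (Fin d)), T.card ≤ cd ∧
        Metric.closedBall x s ⊆ ⋃ y ∈ T, Metric.closedBall y (s / 2))
    (α : ℝ) (hα0 : 0 < α) (hα1 : α < 1)
    (p : EuclideanSpace ℝ (Fin d)) (r : ℝ) (hr : 0 < r) :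
    ({o ∈ O | (o ∩ Metric.closedBall p r).Nonempty ∧ 2 * r * α ≤ Metric.diam o}.ncard : ℝ)
      ≤ ρ * (cd : ℝ) ^ ⌈Real.logb 2 (1 / α)⌉₊ := by
  have hρ : 0 ≤ ρ := le_trans (Nat.cast_nonneg _) (hdens ∅ Bornology.isBounded_empty)
  refine stmt2_aux d O hfin ρ hρ hdens cd hcd _ _ p r hr ?_
  have h1 : 1 / α ≤ 2 ^ ⌈Real.logb 2 (1 / α)⌉₊ := by
    have := (Real.logb_le_iff_le_rpow (by norm_num : (1:ℝ) < 2) (by positivity)).1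
      (Nat.le_ceil (Real.logb 2 (1 / α)))
    rwa [Real.rpow_natCast] at this
  rw [div_le_iff₀ hα0] at h1
  nlinarith
end

section
/- There exists a constant C depending only on d such that the following holds: if O is a finite family of bounded nonempty objects in ℝ^d with density ρ, t ≥ 1 is an integer, and O' is a t-shallow minor of O, then O' has density at most ρ·(t+1)^C. -/
/-- A graph is `t`-shallow if some vertex reaches every other vertex by a path of at most
`t` edges (graph radius at most `t`). -/
def IsShallowGraph {V : Type*} (G : SimpleGraph V) (t : ℕ) : Prop :=
  ∃ h : V, ∀ v : V, G.Reachable h v ∧ G.dist h v ≤ t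

/-- `O'` is a `t`-shallow minor of the family `O`: every member of `O'` is the union of a
cluster (a subfamily of `O`), the clusters are pairwise disjoint, and the intersection graph
of each cluster is `t`-shallow. -/
def IsShallowMinorFamily (d t : ℕ) (O O' : Set (Set (EuclideanSpace ℝ (Fin d)))) : Prop :=
  ∃ cl : O' → Set (Set (EuclideanSpace ℝ (Fin d))),
    (∀ o', cl o' ⊆ O) ∧
    (∀ o' : O', (o' : Set (EuclideanSpace ℝ (Fin d))) = ⋃₀ cl o') ∧
    (∀ o₁ o₂ : O', o₁ ≠ o₂ → Disjoint (cl o₁) (cl o₂)) ∧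
    (∀ o', IsShallowGraph (InterGraph (cl o')) t)

lemma walk_aux {d : ℕ} (c : Set (Set (EuclideanSpace ℝ (Fin d))))
    (hb : ∀ o ∈ c, Bornology.IsBounded o) (r : ℝ) (hr : 0 ≤ r) {u v : c}
    (w : (InterGraph c).Walk u v) : ∀ p ∈ u.1,
    (∃ o ∈ c, r ≤ Metric.diam o ∧ ∃ x ∈ o, dist p x ≤ w.length * r) ∨
    (∀ x ∈ v.1, dist p x ≤ (w.length + 1) * r) := by
  induction w with
  | @nil u =>
    intro p hp
    by_cases h : r ≤ Metric.diam u.1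
    · exact Or.inl ⟨u.1, u.2, h, p, hp, by simp⟩
    · right
      intro x hx
      have := Metric.dist_le_diam_of_mem (hb _ u.2) hp hx
      simp
      linarith
  | @cons u v w hadj W ih =>
    intro p hp
    by_cases h : r ≤ Metric.diam u.1
    · exact Or.inl ⟨u.1, u.2, h, p, hp, by simp; positivity⟩
    · have hq : ∃ q, q ∈ u.1 ∧ q ∈ v.1 := by
        unfold InterGraph at hadj
        rw [SimpleGraph.fromRel_adj] at hadj
        rcases hadj.2 with ⟨q, h1, h2⟩ | ⟨q, h1, h2⟩
        · exact ⟨q, h1, h2⟩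
        · exact ⟨q, h2, h1⟩
      obtain ⟨q, hqu, hqv⟩ := hq
      have h1 := Metric.dist_le_diam_of_mem (hb _ u.2) hp hqu
      rcases ih q hqv with ⟨o, ho, hro, x, hx, hd⟩ | hall
      · left
        refine ⟨o, ho, hro, x, hx, ?_⟩
        have := dist_triangle p q x
        rw [SimpleGraph.Walk.length_cons]
        push_cast
        linarith
      · right
        intro x hx
        have := dist_triangle p q x
        have := hall x hx
        rw [SimpleGraph.Walk.length_cons]
        push_cast
        linarith

lemma big_obj {d t : ℕ} (c : Set (Set (EuclideanSpace ℝ (Fin d))))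
    (hb : ∀ o ∈ c, Bornology.IsBounded o) (hs : IsShallowGraph (InterGraph c) t)
    (D : ℝ) (hD : 0 < D) (hdiam : D ≤ Metric.diam (⋃₀ c))
    (p : EuclideanSpace ℝ (Fin d)) (hp : p ∈ ⋃₀ c) :
    ∃ o ∈ c, D / (4 * (2 * t + 1)) ≤ Metric.diam o ∧ ∃ x ∈ o, dist p x ≤ D := by
  set r : ℝ := D / (4 * (2 * t + 1)) with hrdef
  have hr : 0 < r := by positivity
  have hrD : r * (4 * (2 * t + 1)) = D := by rw [hrdef]; field_simp
  by_contra hno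
  obtain ⟨h, hh⟩ := hs
  obtain ⟨u, huc, hpu⟩ := hp
  have key : ∀ x ∈ ⋃₀ c, dist p x ≤ (2 * t + 1) * r := by
    rintro x ⟨v, hvc, hxv⟩
    obtain ⟨w1, hw1⟩ := (hh ⟨u, huc⟩).1.exists_walk_length_eq_dist
    obtain ⟨w2, hw2⟩ := (hh ⟨v, hvc⟩).1.exists_walk_length_eq_dist
    have hl : ((w1.reverse.append w2).length : ℝ) ≤ 2 * t := by
      rw [SimpleGraph.Walk.length_append, SimpleGraph.Walk.length_reverse]
      have a := (hh ⟨u, huc⟩).2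
      have b := (hh ⟨v, hvc⟩).2
      exact_mod_cast (by omega : w1.length + w2.length ≤ 2 * t)
    have hl2 := mul_le_mul_of_nonneg_right hl hr.le
    rcases walk_aux c hb r hr.le (w1.reverse.append w2) p hpu with ⟨o, ho, hro, y, hy, hd⟩ | hall
    · exact absurd ⟨o, ho, hro, y, hy, by nlinarith [(Nat.cast_nonneg t : (0:ℝ) ≤ t)]⟩ hno
    · have := hall x hxv
      nlinarith
  have : Metric.diam (⋃₀ c) ≤ 2 * ((2 * t + 1) * r) := by
    apply Metric.diam_le_of_forall_dist_le (by positivity)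
    intro x hx y hy
    have h1 := key x hx
    have h2 := key y hy
    have := dist_triangle_left x y p
    linarith
  linarith

lemma cell_diam {d : ℕ} (s : ℝ) (hs : 0 < s) (a : Fin d → ℝ) (f : Fin d → ℕ)
    (c : Set (EuclideanSpace ℝ (Fin d)))
    (hcell : ∀ x ∈ c, ∀ i, 0 ≤ x i - a i ∧ ⌊(x i - a i) / s⌋₊ = f i) :
    Metric.diam c ≤ (d + 1) * s := by
  apply Metric.diam_le_of_forall_dist_le (by positivity)
  intro x hx y hy
  have hc : ∀ i, |x i - y i| ≤ s := by
    intro i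
    obtain ⟨hx0, hx1⟩ := hcell x hx i
    obtain ⟨hy0, hy1⟩ := hcell y hy i
    have a1 := Nat.floor_le (div_nonneg hx0 hs.le)
    have a2 := Nat.lt_floor_add_one ((x i - a i) / s)
    have b1 := Nat.floor_le (div_nonneg hy0 hs.le)
    have b2 := Nat.lt_floor_add_one ((y i - a i) / s)
    rw [hx1] at a1 a2
    rw [hy1] at b1 b2
    rw [le_div_iff₀ hs] at a1 b1
    rw [div_lt_iff₀ hs] at a2 b2
    rw [abs_le]
    constructor <;> nlinarith
  rw [EuclideanSpace.dist_eq]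
  apply Real.sqrt_le_iff.2
  refine ⟨by positivity, ?_⟩
  calc ∑ i, dist (x i) (y i) ^ 2 ≤ ∑ i : Fin d, s ^ 2 := by
        apply Finset.sum_le_sum
        intro i _
        rw [Real.dist_eq]
        exact pow_le_pow_left₀ (abs_nonneg _) (hc i) 2
    _ = d * s ^ 2 := by simp
    _ ≤ ((d + 1) * s) ^ 2 := by
        have : (0:ℝ) ≤ d := Nat.cast_nonneg d
        rw [mul_pow]
        apply mul_le_mul_of_nonneg_right _ (by positivity)
        nlinarith

lemma cover_count {d : ℕ} (O : Set (Set (EuclideanSpace ℝ (Fin d)))) (ρ : ℝ) (hfin : O.Finite)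
    (hρ : FamilyDensityLE d O ρ) (p : EuclideanSpace ℝ (Fin d)) (R r : ℝ) (hr : 0 < r)
    (M : ℕ) (hM : 2 * R * (d + 1) / r < M) :
    (({o ∈ O | r ≤ Metric.diam o ∧ ∃ x ∈ o, dist p x ≤ R}).ncard : ℝ) ≤ (M : ℝ) ^ d * ρ := by
  set s : ℝ := r / (d + 1) with hsdef
  have hs : 0 < s := by positivity
  have hsr : (d + 1) * s = r := by rw [hsdef]; field_simp
  let a : Fin d → ℝ := fun i => p i - R
  let cell : (Fin d → ℕ) → Set (EuclideanSpace ℝ (Fin d)) := fun f =>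
    {x | dist p x ≤ R ∧ ∀ i, 0 ≤ x i - a i ∧ ⌊(x i - a i) / s⌋₊ = f i}
  have hcb : ∀ f, Bornology.IsBounded (cell f) := fun f =>
    (Metric.isBounded_closedBall (x := p) (r := R)).subset
      (fun x hx => by rw [Metric.mem_closedBall, dist_comm]; exact hx.1)
  have hcd : ∀ f, Metric.diam (cell f) ≤ r := by
    intro f
    rw [← hsr]
    exact cell_diam s hs a f _ (fun x hx => hx.2)
  let F : Finset (Fin d → ℕ) := Fintype.piFinset (fun _ => Finset.range M)
  let A : (Fin d → ℕ) → Set (Set (EuclideanSpace ℝ (Fin d))) := fun f =>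
    {o ∈ O | (o ∩ cell f).Nonempty ∧ Metric.diam (cell f) ≤ Metric.diam o}
  have hsub : {o ∈ O | r ≤ Metric.diam o ∧ ∃ x ∈ o, dist p x ≤ R} ⊆ ⋃ f ∈ F, A f := by
    rintro o ⟨ho, hro, x, hx, hpx⟩
    have hco : ∀ i, |p i - x i| ≤ R := by
      intro i
      have := PiLp.norm_apply_le (p - x) i
      rw [← dist_eq_norm] at this
      simp only [PiLp.sub_apply, Real.norm_eq_abs] at this
      linarith
    simp only [Set.mem_iUnion]
    refine ⟨fun i => ⌊(x i - a i) / s⌋₊, ?_, ho, ⟨x, hx, hpx, fun i => ⟨?_, rfl⟩⟩, (hcd _).trans hro⟩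
    · rw [Fintype.mem_piFinset]
      intro i
      rw [Finset.mem_range]
      have h1 := abs_le.1 (hco i)
      have h0 : 0 ≤ x i - a i := by simp only [a]; linarith
      rw [Nat.floor_lt (div_nonneg h0 hs.le)]
      refine lt_of_le_of_lt ?_ hM
      rw [hsdef, div_div_eq_mul_div]
      have : x i - a i ≤ 2 * R := by simp only [a]; linarith
      gcongr
    · have h1 := abs_le.1 (hco i)
      simp only [a]; linarith
  have hAfin : (⋃ f ∈ F, A f).Finite :=
    hfin.subset (by intro o ho; simp only [Set.mem_iUnion] at ho; obtain ⟨f, _, h⟩ := ho; exact h.1)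
  have h1 := Set.ncard_le_ncard hsub hAfin
  have h2 : (⋃ f ∈ F, A f).ncard ≤ ∑ f ∈ F, (A f).ncard := Finset.set_ncard_biUnion_le F A
  have h3 : (∑ f ∈ F, ((A f).ncard : ℝ)) ≤ ∑ f ∈ F, ρ :=
    Finset.sum_le_sum (fun f _ => hρ (cell f) (hcb f))
  have h4 : ∑ f ∈ F, ρ = (M : ℝ) ^ d * ρ := by
    simp [F, Fintype.card_piFinset]
  rw [← h4]
  refine le_trans ?_ h3
  exact_mod_cast h1.trans h2

lemma num_bound (d t : ℕ) (ht : 1 ≤ t) :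
    (16 * (d + 1) * (2 * t + 1) + 1) ^ d ≤ (t + 1) ^ ((d + 7) * d + 1) := by
  have h2 : 2 ≤ t + 1 := by omega
  have hd : d + 1 ≤ 2 ^ (d + 1) := Nat.lt_two_pow_self.le
  have h : 16 * (d + 1) * (2 * t + 1) + 1 ≤ (t + 1) ^ (d + 7) := by
    calc 16 * (d + 1) * (2 * t + 1) + 1 ≤ 2 ^ 5 * (d + 1) * (t + 1) := by nlinarith
      _ ≤ 2 ^ 5 * 2 ^ (d + 1) * (t + 1) := by gcongr
      _ ≤ (t + 1) ^ 5 * (t + 1) ^ (d + 1) * (t + 1) := by gcongr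
      _ = (t + 1) ^ (d + 7) := by ring
  calc _ ≤ ((t + 1) ^ (d + 7)) ^ d := Nat.pow_le_pow_left h d
    _ = (t + 1) ^ ((d + 7) * d) := by rw [← pow_mul]
    _ ≤ _ := Nat.pow_le_pow_right (by omega) (by omega)

lemma inj_count {d : ℕ} {O' S T : Set (Set (EuclideanSpace ℝ (Fin d)))} (hT : T.Finite)
    (cl : O' → Set (Set (EuclideanSpace ℝ (Fin d))))
    (hdisj : ∀ o₁ o₂ : O', o₁ ≠ o₂ → Disjoint (cl o₁) (cl o₂))
    (hS : S ⊆ O') (h : ∀ o' : O', o'.1 ∈ S → ∃ o ∈ cl o', o ∈ T) :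
    S.ncard ≤ T.ncard := by
  have h' : ∀ s ∈ S, ∃ o, ∃ hs : s ∈ O', o ∈ cl ⟨s, hs⟩ ∧ o ∈ T := by
    intro s hs
    obtain ⟨o, h1, h2⟩ := h ⟨s, hS hs⟩ hs
    exact ⟨o, hS hs, h1, h2⟩
  choose! g hg using h'
  refine Set.ncard_le_ncard_of_injOn g (fun s hs => (hg s hs).2.2) ?_ hT
  intro s hs s' hs' heq
  by_contra hne
  obtain ⟨h1, h2, -⟩ := hg s hs
  obtain ⟨h3, h4, -⟩ := hg s' hs'
  rw [← heq] at h4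
  exact Set.disjoint_left.1 (hdisj ⟨s, h1⟩ ⟨s', h3⟩ (fun e => hne (congrArg Subtype.val e))) h2 h4

/-- there is a constant `C = C(d)` so that every `t`-shallow minor of a family
of density `ρ` has density at most `ρ·(t+1)^C`. -/
theorem stmt3 (d : ℕ) :
    ∃ C : ℕ, 0 < C ∧
      ∀ (O O' : Set (Set (EuclideanSpace ℝ (Fin d)))) (ρ : ℝ) (t : ℕ),
        O.Finite → (∀ o ∈ O, Bornology.IsBounded o) → (∀ o ∈ O, o.Nonempty) →
        FamilyDensityLE d O ρ → 1 ≤ t → IsShallowMinorFamily d t O O' →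
        FamilyDensityLE d O' (ρ * ((t : ℝ) + 1) ^ C) := by
  refine ⟨(d + 7) * d + 1, by omega, ?_⟩
  intro O O' ρ t hfin hbdd hne hρ ht hminor b hb
  obtain ⟨cl, hcl, hun, hdisj, hsh⟩ := hminor
  have hρ0 : 0 ≤ ρ := by
    have := hρ ∅ Bornology.isBounded_empty
    exact le_trans (Nat.cast_nonneg _) this
  set D := Metric.diam b with hDdef
  have hSO : {o ∈ O' | (o ∩ b).Nonempty ∧ D ≤ Metric.diam o} ⊆ O' := fun o ho => ho.1
  rcases (Metric.diam_nonneg (s := b)).eq_or_lt with h0 | hpos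
  · have hTf : {o ∈ O | (o ∩ b).Nonempty ∧ Metric.diam b ≤ Metric.diam o}.Finite :=
      hfin.subset (fun o ho => ho.1)
    have hle := inj_count hTf cl hdisj hSO (by
      rintro o' ⟨-, ⟨p, hp, hpb⟩, -⟩
      rw [hun o'] at hp
      obtain ⟨o, ho, hpo⟩ := hp
      exact ⟨o, ho, hcl o' ho, ⟨p, hpo, hpb⟩, by rw [← h0]; exact Metric.diam_nonneg⟩)
    have h1 : (1:ℝ) ≤ ((t:ℝ) + 1) ^ ((d + 7) * d + 1) :=
      one_le_pow₀ (by have := (Nat.cast_nonneg t : (0:ℝ) ≤ t); linarith)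
    calc _ ≤ _ := by exact_mod_cast hle
      _ ≤ ρ := hρ b hb
      _ ≤ _ := le_mul_of_one_le_right hρ0 h1
  · rw [← hDdef] at hpos
    obtain ⟨p0, hp0⟩ : b.Nonempty := by
      rw [Set.nonempty_iff_ne_empty]
      rintro rfl
      simp [hDdef] at hpos
    set r : ℝ := D / (4 * (2 * t + 1)) with hrdef
    have hr : 0 < r := by positivity
    have hcount := cover_count O ρ hfin hρ p0 (2 * D) r hr (16 * (d + 1) * (2 * t + 1) + 1) (by
      have : 2 * (2 * D) * (d + 1) / r = 16 * (d + 1) * (2 * t + 1) := by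
        rw [hrdef]; field_simp; ring
      rw [this]
      push_cast
      linarith)
    have hTf : {o ∈ O | r ≤ Metric.diam o ∧ ∃ x ∈ o, dist p0 x ≤ 2 * D}.Finite :=
      hfin.subset (fun o ho => ho.1)
    have hle := inj_count hTf cl hdisj hSO (by
      rintro o' ⟨-, ⟨p, hp, hpb⟩, hdo⟩
      rw [hun o'] at hp hdo
      obtain ⟨o, ho, hro, x, hx, hpx⟩ := big_obj (cl o') (fun o ho => hbdd o (hcl o' ho))
        (hsh o') D hpos hdo p hp
      refine ⟨o, ho, hcl o' ho, hro, x, hx, ?_⟩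
      have h1 := Metric.dist_le_diam_of_mem hb hp0 hpb
      have := dist_triangle p0 p x
      linarith)
    calc _ ≤ _ := by exact_mod_cast hle
      _ ≤ _ := hcount
      _ ≤ ((t:ℝ) + 1) ^ ((d + 7) * d + 1) * ρ := by
        apply mul_le_mul_of_nonneg_right _ hρ0
        exact_mod_cast num_bound d t ht
      _ = _ := mul_comm _ _
end

section
/- There exists a constant C depending only on d such that: if G is the intersection graph of a finite family of bounded nonempty objects in ℝ^d with density ρ, then for every integer r ≥ 1, the r-shallow density satisfies ∇_r(G) ≤ C·ρ·(r+1)^C. -/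
/-- `H` is a `t`-shallow minor of `G`: vertices of `H` correspond to pairwise disjoint
clusters of vertices of `G`, each inducing a connected `t`-shallow subgraph, and edges of
`H` only join clusters joined by an edge of `G`. -/
def IsShallowMinor {V W : Type*} (G : SimpleGraph V) (H : SimpleGraph W) (t : ℕ) : Prop :=
  ∃ cl : W → Set V,
    (Pairwise fun w w' => Disjoint (cl w) (cl w')) ∧
    (∀ w, IsShallowGraph (G.induce (cl w)) t) ∧
    (∀ w w', H.Adj w w' → ∃ u ∈ cl w, ∃ v ∈ cl w', G.Adj u v)

/-- `∇_r(G) ≤ x`: every `r`-shallow minor `H` of `G` (on a finite vertex set) satisfies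
`|E(H)| ≤ x·|V(H)|`. -/
def NablaLE {V : Type*} (G : SimpleGraph V) (r : ℕ) (x : ℝ) : Prop :=
  ∀ (W : Type) [Fintype W] (H : SimpleGraph W),
    IsShallowMinor G H r → (H.edgeSet.ncard : ℝ) ≤ x * (Fintype.card W : ℝ)

open Classical in
theorem aux_cover (d n : ℕ) (s : ℝ) (hs : 0 ≤ s) (p : EuclideanSpace ℝ (Fin d)) :
    ∃ f : EuclideanSpace ℝ (Fin d) → (Fin d → Fin (2 * n * (d + 1) + 1)),
      ∀ x ∈ Metric.closedBall p (n * s), ∀ y ∈ Metric.closedBall p (n * s),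
        f x = f y → dist x y ≤ s := by
  rcases hs.eq_or_lt with h0 | hs
  · subst h0
    refine ⟨fun _ _ => 0, fun x hx y hy _ => ?_⟩
    simp at hx hy
    subst hx; subst hy; simp
  · have hd : (0 : ℝ) < d + 1 := by positivity
    set h : ℝ := s / (d + 1) with hh
    have hpos : 0 < h := by positivity
    have hsh : s = h * (d + 1) := by rw [hh]; field_simp
    refine ⟨fun x i => ⟨min ⌊(x i - p i + n * s) / h⌋₊ (2 * n * (d + 1)), by omega⟩, ?_⟩
    intro x hx y hy hxy
    have key : ∀ z ∈ Metric.closedBall p (n * s), ∀ i,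
        0 ≤ (z i - p i + n * s) / h ∧ ⌊(z i - p i + n * s) / h⌋₊ ≤ 2 * n * (d + 1) := by
      intro z hz i
      have h1 : |z i - p i| ≤ n * s := by
        have h2 := PiLp.norm_apply_le (z - p) i
        rw [Metric.mem_closedBall, dist_eq_norm] at hz
        simpa using h2.trans hz
      rw [abs_le] at h1
      refine ⟨div_nonneg (by linarith) hpos.le, ?_⟩
      apply Nat.floor_le_of_le
      rw [div_le_iff₀ hpos]
      push_cast
      have : (2 * (n : ℝ) * (d + 1)) * h = 2 * (n * s) := by rw [hsh]; ring
      linarith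
    have hc : ∀ i, |x i - y i| ≤ h := by
      intro i
      have e := congrFun hxy i
      simp only [Fin.mk.injEq] at e
      rw [min_eq_left (key x hx i).2, min_eq_left (key y hy i).2] at e
      have a1 := Nat.floor_le (key x hx i).1
      have a2 := Nat.lt_floor_add_one ((x i - p i + n * s) / h)
      have b1 := Nat.floor_le (key y hy i).1
      have b2 := Nat.lt_floor_add_one ((y i - p i + n * s) / h)
      rw [e] at a1 a2
      have : |(x i - p i + n * s) / h - (y i - p i + n * s) / h| ≤ 1 := by
        rw [abs_le]; constructor <;> linarith
      rw [← sub_div, abs_div, abs_of_pos hpos, div_le_one hpos] at this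
      have e2 : x i - p i + n * s - (y i - p i + n * s) = x i - y i := by ring
      rwa [e2] at this
    rw [EuclideanSpace.dist_eq]
    apply Real.sqrt_le_iff.2 ⟨hs.le, ?_⟩
    calc ∑ i, dist (x i) (y i) ^ 2 ≤ ∑ i : Fin d, h ^ 2 := by
          apply Finset.sum_le_sum
          intro i _
          rw [Real.dist_eq]
          exact pow_le_pow_left₀ (abs_nonneg _) (hc i) 2
      _ = d * h ^ 2 := by simp
      _ ≤ s ^ 2 := by
          rw [hsh, mul_pow]
          have : (0 : ℝ) ≤ d := by positivity
          nlinarith [sq_nonneg h, mul_nonneg this (sq_nonneg h),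
            mul_nonneg (mul_nonneg this this) (sq_nonneg h)]

theorem aux_count (d n : ℕ) (O : Set (Set (EuclideanSpace ℝ (Fin d)))) (ρ : ℝ) (hO : O.Finite)
    (hρ : FamilyDensityLE d O ρ) (s : ℝ) (hs : 0 ≤ s) (p : EuclideanSpace ℝ (Fin d)) :
    (({o ∈ O | (o ∩ Metric.closedBall p (n * s)).Nonempty ∧ s ≤ Metric.diam o}.ncard : ℕ) : ℝ)
      ≤ ((2 * n * (d + 1) + 1 : ℕ) : ℝ) ^ d * ρ := by
  classical
  obtain ⟨f, hf⟩ := aux_cover d n s hs p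
  set B : (Fin d → Fin (2 * n * (d + 1) + 1)) → Set (EuclideanSpace ℝ (Fin d)) :=
    fun c => {x ∈ Metric.closedBall p (n * s) | f x = c} with hB
  set T : (Fin d → Fin (2 * n * (d + 1) + 1)) → Set (Set (EuclideanSpace ℝ (Fin d))) :=
    fun c => {o ∈ O | (o ∩ B c).Nonempty ∧ Metric.diam (B c) ≤ Metric.diam o} with hT
  have hfin : ∀ c, (T c).Finite := fun c => hO.subset (fun o ho => ho.1)
  have hsub : {o ∈ O | (o ∩ Metric.closedBall p (n * s)).Nonempty ∧ s ≤ Metric.diam o} ⊆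
      ⋃ c ∈ (Finset.univ : Finset (Fin d → Fin (2 * n * (d + 1) + 1))), T c := by
    rintro o ⟨ho, ⟨x, hx, hxb⟩, hso⟩
    simp only [Finset.mem_univ, Set.iUnion_true, Set.mem_iUnion]
    refine ⟨f x, ho, ⟨x, hx, hxb, rfl⟩, le_trans ?_ hso⟩
    apply Metric.diam_le_of_forall_dist_le hs
    rintro y ⟨hy, hy'⟩ z ⟨hz, hz'⟩
    exact hf y hy z hz (hy'.trans hz'.symm)
  have h1 : {o ∈ O | (o ∩ Metric.closedBall p (n * s)).Nonempty ∧ s ≤ Metric.diam o}.ncard ≤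
      ∑ c, (T c).ncard := by
    refine (Set.ncard_le_ncard hsub ?_).trans (Finset.set_ncard_biUnion_le _ _)
    exact Set.Finite.biUnion (Finset.finite_toSet _) (fun c _ => hfin c)
  calc _ ≤ ((∑ c, (T c).ncard : ℕ) : ℝ) := by exact_mod_cast h1
    _ = ∑ c, ((T c).ncard : ℝ) := by push_cast; rfl
    _ ≤ ∑ c : (Fin d → Fin (2 * n * (d + 1) + 1)), ρ :=
        Finset.sum_le_sum (fun c _ => hρ (B c)
          (Metric.isBounded_closedBall.subset (fun x hx => hx.1)))
    _ = _ := by simp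

theorem aux_walk {d : ℕ} (O : Set (Set (EuclideanSpace ℝ (Fin d))))
    (hbd : ∀ o ∈ O, Bornology.IsBounded o) (S : Set O) (r : ℕ) (s : ℝ)
    (hs : 0 ≤ s) (p q : EuclideanSpace ℝ (Fin d)) (R : ℝ)
    (hq : dist q p + (2 * r + 1) * s ≤ R)
    (hsmall : ∀ o ∈ S, ((o : Set (EuclideanSpace ℝ (Fin d))) ∩ Metric.closedBall p R).Nonempty →
      Metric.diam (o : Set (EuclideanSpace ℝ (Fin d))) < s) :
    ∀ (a b : S) (W : ((InterGraph O).induce S).Walk a b) (k : ℕ), k + W.length ≤ 2 * r →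
      (∀ x ∈ (a : Set (EuclideanSpace ℝ (Fin d))), dist x q ≤ (k + 1) * s) →
      ∀ x ∈ (b : Set (EuclideanSpace ℝ (Fin d))), dist x q ≤ (2 * r + 1) * s := by
  intro a b W
  induction W with
  | nil =>
    intro k hk h x hx
    refine (h x hx).trans ?_
    have : (k : ℝ) ≤ 2 * r := by simp at hk; exact_mod_cast hk
    nlinarith
  | @cons a c b hac W ih =>
    intro k hk h
    simp only [SimpleGraph.Walk.length_cons] at hk
    apply ih (k + 1) (by omega)
    have hk' : (k : ℝ) + 1 ≤ 2 * r := by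
      have : k + 1 ≤ 2 * r := by omega
      exact_mod_cast this
    obtain ⟨z, hza, hzc⟩ : ((a : Set (EuclideanSpace ℝ (Fin d))) ∩ c).Nonempty := by
      simp only [SimpleGraph.comap_adj, InterGraph, SimpleGraph.fromRel_adj] at hac
      rcases hac.2 with h | h
      · exact h
      · rw [Set.inter_comm]; exact h
    have hz := h z hza
    have hzp : dist z p ≤ R := by
      have := dist_triangle z q p
      nlinarith
    have hd := hsmall c c.2 ⟨z, hzc, hzp⟩
    intro x hx
    have h1 := Metric.dist_le_diam_of_mem (hbd _ c.1.2) hx hzc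
    have := dist_triangle x z q
    push_cast
    linarith

theorem aux_exists {d : ℕ} (O : Set (Set (EuclideanSpace ℝ (Fin d))))
    (hbd : ∀ o ∈ O, Bornology.IsBounded o) (S : Set O) (r : ℕ)
    (hS : IsShallowGraph ((InterGraph O).induce S) r) (δ s : ℝ) (hs : 0 ≤ s)
    (hδ : δ = (8 * r + 4) * s) (p q : EuclideanSpace ℝ (Fin d)) (hpq : dist q p ≤ δ)
    (o₁ : O) (ho₁ : o₁ ∈ S) (hq : q ∈ (o₁ : Set (EuclideanSpace ℝ (Fin d))))
    (hdiam : δ ≤ Metric.diam (⋃ o ∈ S, (o : Set (EuclideanSpace ℝ (Fin d))))) :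
    ∃ o ∈ S, ((o : Set (EuclideanSpace ℝ (Fin d))) ∩ Metric.closedBall p (2 * δ)).Nonempty ∧
      s ≤ Metric.diam (o : Set (EuclideanSpace ℝ (Fin d))) := by
  by_contra! hcon
  have hδ0 : 0 ≤ δ := by rw [hδ]; positivity
  have hd1 := hcon o₁ ho₁ ⟨q, hq, by simp; linarith⟩
  have hspos : 0 < s := lt_of_le_of_lt Metric.diam_nonneg hd1
  have hr : (0 : ℝ) ≤ r := by positivity
  have hall : ∀ o ∈ S, ∀ x ∈ (o : Set (EuclideanSpace ℝ (Fin d))), dist x q ≤ (2 * r + 1) * s := by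
    intro o ho
    obtain ⟨c, hc⟩ := hS
    obtain ⟨W1, hW1⟩ := (hc ⟨o₁, ho₁⟩).1.exists_walk_length_eq_dist
    obtain ⟨W2, hW2⟩ := (hc ⟨o, ho⟩).1.exists_walk_length_eq_dist
    have l1 := (hc ⟨o₁, ho₁⟩).2
    have l2 := (hc ⟨o, ho⟩).2
    refine aux_walk O hbd S r s hs p q (2 * δ) (by nlinarith) hcon ⟨o₁, ho₁⟩ ⟨o, ho⟩
      (W1.reverse.append W2) 0 ?_ ?_
    · simp [SimpleGraph.Walk.length_append]; omega
    · intro x hx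
      have := Metric.dist_le_diam_of_mem (hbd _ o₁.2) hx hq
      push_cast; linarith
  have : Metric.diam (⋃ o ∈ S, (o : Set (EuclideanSpace ℝ (Fin d)))) ≤ 2 * ((2 * r + 1) * s) := by
    apply Metric.diam_le_of_forall_dist_le (by positivity)
    intro x hx y hy
    simp only [Set.mem_iUnion] at hx hy
    obtain ⟨o, ho, hx⟩ := hx
    obtain ⟨o', ho', hy⟩ := hy
    have h1 := hall o ho x hx
    have h2 := hall o' ho' y hy
    have := dist_triangle_right x y q
    linarith
  nlinarith

open Classical in
theorem aux_edges {W : Type} [Fintype W] (H : SimpleGraph W) (D : W → ℝ) (N : ℝ)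
    (h : ∀ w, (({w' | H.Adj w w' ∧ D w ≤ D w'}.ncard : ℕ) : ℝ) ≤ N) :
    (H.edgeSet.ncard : ℝ) ≤ N * Fintype.card W := by
  have hsub : H.edgeSet ⊆ ⋃ w ∈ (Finset.univ : Finset W),
      (fun w' => s(w, w')) '' {w' | H.Adj w w' ∧ D w ≤ D w'} := by
    intro e he
    induction e using Sym2.ind with
    | _ a b =>
      simp only [Finset.mem_univ, Set.iUnion_true, Set.mem_iUnion]
      rw [SimpleGraph.mem_edgeSet] at he
      rcases le_total (D a) (D b) with hl | hl
      · exact ⟨a, b, ⟨he, hl⟩, rfl⟩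
      · exact ⟨b, a, ⟨he.symm, hl⟩, Sym2.eq_swap⟩
  have h1 : H.edgeSet.ncard ≤ ∑ w, {w' | H.Adj w w' ∧ D w ≤ D w'}.ncard := by
    refine (Set.ncard_le_ncard hsub (Set.toFinite _)).trans
      ((Finset.set_ncard_biUnion_le _ _).trans ?_)
    exact Finset.sum_le_sum (fun w _ => Set.ncard_image_le (Set.toFinite _))
  calc (H.edgeSet.ncard : ℝ) ≤ ((∑ w, {w' | H.Adj w w' ∧ D w ≤ D w'}.ncard : ℕ) : ℝ) := by
        exact_mod_cast h1
    _ = ∑ w, ({w' | H.Adj w w' ∧ D w ≤ D w'}.ncard : ℝ) := by push_cast; rfl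
    _ ≤ ∑ w : W, N := Finset.sum_le_sum (fun w _ => h w)
    _ = _ := by simp [mul_comm]

theorem aux_main (d : ℕ) (O : Set (Set (EuclideanSpace ℝ (Fin d)))) (ρ : ℝ)
    (hO : O.Finite) (hbd : ∀ o ∈ O, Bornology.IsBounded o) (hne : ∀ o ∈ O, o.Nonempty)
    (hρ : FamilyDensityLE d O ρ) (r : ℕ) :
    NablaLE (InterGraph O) r (((2 * (16 * r + 8) * (d + 1) + 1 : ℕ) : ℝ) ^ d * ρ) := by
  intro W _ H ⟨cl, hdisj, hsh, hadj⟩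
  have : Finite O := hO
  set U : W → Set (EuclideanSpace ℝ (Fin d)) := fun w => ⋃ o ∈ cl w, (o : Set _) with hU
  have hUb : ∀ w, Bornology.IsBounded (U w) := fun w =>
    (Bornology.isBounded_biUnion (Set.toFinite _)).2 (fun o _ => hbd o o.2)
  apply aux_edges H (fun w => Metric.diam (U w))
  intro w
  set δ := Metric.diam (U w) with hδ
  have hδ0 : 0 ≤ δ := Metric.diam_nonneg
  set s : ℝ := δ / (8 * r + 4) with hs
  have hs0 : 0 ≤ s := by positivity
  have hδs : δ = (8 * r + 4) * s := by rw [hs]; field_simp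
  obtain ⟨c, -⟩ := hsh w
  obtain ⟨p, hp⟩ := hne c.1 c.1.2
  have hpU : p ∈ U w := Set.mem_biUnion c.2 hp
  have hex : ∀ w', (H.Adj w w' ∧ δ ≤ Metric.diam (U w')) → ∃ o ∈ cl w',
      ((o : Set (EuclideanSpace ℝ (Fin d))) ∩ Metric.closedBall p (2 * δ)).Nonempty ∧
      s ≤ Metric.diam (o : Set (EuclideanSpace ℝ (Fin d))) := by
    rintro w' ⟨hw, hl⟩
    obtain ⟨u, hu, v, hv, huv⟩ := hadj w w' hw
    obtain ⟨q, hqu, hqv⟩ : ((u : Set (EuclideanSpace ℝ (Fin d))) ∩ v).Nonempty := by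
      simp only [InterGraph, SimpleGraph.fromRel_adj] at huv
      rcases huv.2 with h | h
      · exact h
      · rw [Set.inter_comm]; exact h
    exact aux_exists O hbd (cl w') r (hsh w') δ s hs0 hδs p q
      (Metric.dist_le_diam_of_mem (hUb w) (Set.mem_biUnion hu hqu) hpU) v hv hqv hl
  have : Nonempty O := ⟨c.1⟩
  choose! g hg1 hg2 using hex
  have hcount := aux_count d (16 * r + 8) O ρ hO hρ s hs0 p
  have hR : ((16 * r + 8 : ℕ) : ℝ) * s = 2 * δ := by rw [hδs]; push_cast; ring
  rw [hR] at hcount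
  refine le_trans ?_ hcount
  norm_cast
  refine Set.ncard_le_ncard_of_injOn (fun w' => (g w' : Set (EuclideanSpace ℝ (Fin d)))) ?_ ?_
    (hO.subset (fun o ho => ho.1))
  · intro w' hw'
    exact ⟨(g w').2, hg2 w' hw'⟩
  · intro w1 h1 w2 h2 he
    by_contra hn
    have he' : g w1 = g w2 := Subtype.ext he
    exact Set.disjoint_left.1 (hdisj hn) (hg1 w1 h1) (he' ▸ hg1 w2 h2)

/-- there is a constant `C = C(d)` such that the intersection graph `G` of a
finite family of bounded nonempty objects of density `ρ` in `ℝ^d` satisfies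
`∇_r(G) ≤ C·ρ·(r+1)^C` for all `r ≥ 1`. -/
theorem stmt4 (d : ℕ) :
    ∃ C : ℕ, 0 < C ∧
      ∀ (O : Set (Set (EuclideanSpace ℝ (Fin d)))) (ρ : ℝ),
        O.Finite → (∀ o ∈ O, Bornology.IsBounded o) → (∀ o ∈ O, o.Nonempty) →
        FamilyDensityLE d O ρ →
        ∀ r : ℕ, 1 ≤ r →
          NablaLE (InterGraph O) r ((C : ℝ) * ρ * ((r : ℝ) + 1) ^ C) := by
  refine ⟨(32 * (d + 1)) ^ d + d, by positivity, ?_⟩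
  intro O ρ hO hbd hne hρ r hr W _ H hH
  refine (aux_main d O ρ hO hbd hne hρ r W H hH).trans ?_
  have hρ0 : 0 ≤ ρ := le_trans (by positivity) (hρ ∅ Bornology.isBounded_empty)
  refine mul_le_mul_of_nonneg_right ?_ (by positivity)
  have h1 : ((2 * (16 * r + 8) * (d + 1) + 1 : ℕ) : ℝ) ≤ (32 * (d + 1)) * (r + 1) := by
    have : 2 * (16 * r + 8) * (d + 1) + 1 ≤ (32 * (d + 1)) * (r + 1) := by nlinarith
    exact_mod_cast this
  have h2 : ((2 * (16 * r + 8) * (d + 1) + 1 : ℕ) : ℝ) ^ d ≤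
      (32 * ((d : ℝ) + 1)) ^ d * ((r : ℝ) + 1) ^ d := by
    rw [← mul_pow]
    exact pow_le_pow_left₀ (by positivity) h1 d
  have h3 : ((r : ℝ) + 1) ^ d ≤ ((r : ℝ) + 1) ^ ((32 * (d + 1)) ^ d + d) :=
    pow_le_pow_right₀ (by linarith [(Nat.cast_nonneg r : (0 : ℝ) ≤ r)]) (by omega)
  have h4 : (32 * ((d : ℝ) + 1)) ^ d ≤ (((32 * (d + 1)) ^ d + d : ℕ) : ℝ) := by
    push_cast
    linarith [(Nat.cast_nonneg d : (0 : ℝ) ≤ d)]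
  calc _ ≤ ((((32 * (d + 1)) ^ d + d : ℕ) : ℝ) * ((r : ℝ) + 1) ^ ((32 * (d + 1)) ^ d + d)) * ρ :=
        mul_le_mul_of_nonneg_right (h2.trans (mul_le_mul h4 h3 (by positivity) (by positivity))) hρ0
    _ = _ := by ring
end

section
/- There exists a constant C depending only on d such that the following holds: for every finite family O of n bounded nonempty objects in ℝ^d with density ρ and every integer 1 ≤ k ≤ n, there exists a (d−1)-dimensional sphere S in ℝ^d such that (i) at most C·(ρ + ρ^{1/d}·k^{1−1/d}) objects of O intersect S, (ii) at most C·k objects of O lie strictly inside S, and (iii) at least k − C·(ρ + ρ^{1/d}·k^{1−1/d}) objects of O lie strictly inside S. -/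
open MeasureTheory

lemma aux_avg {ι : Type*} (F : Finset ι) (J : ι → Set ℝ) (δ : ι → ℝ)
    (hδ : ∀ i, 0 ≤ δ i) (hJ : ∀ i, ∀ x ∈ J i, ∀ y ∈ J i, x - y ≤ δ i) (r : ℝ) (hr : 0 < r) :
    ∃ R ∈ Set.Icc r (2*r), ∀ G ⊆ F, (∀ i ∈ G, R ∈ J i) → (G.card : ℝ) ≤ ∑ i ∈ F, δ i / r := by
  classical
  have h1 : ∀ i, ∃ a, J i ⊆ Set.Icc a (a + δ i) := by
    intro i
    by_cases hne : (J i).Nonempty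
    · obtain ⟨x0, hx0⟩ := hne
      have hbd : BddBelow (J i) := ⟨x0 - δ i, fun y hy => by linarith [hJ i x0 hx0 y hy]⟩
      refine ⟨sInf (J i), fun x hx => ⟨csInf_le hbd hx, ?_⟩⟩
      have : x - δ i ≤ sInf (J i) := le_csInf ⟨x0, hx0⟩ (fun y hy => by linarith [hJ i x hx y hy])
      linarith
    · exact ⟨0, by rw [Set.not_nonempty_iff_eq_empty.mp hne]; exact Set.empty_subset _⟩
  choose a ha using h1
  set f : ℝ → ℝ := fun R => ∑ i ∈ F, (Set.Icc (a i) (a i + δ i)).indicator (fun _ => (1:ℝ)) R with hf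
  have hint : ∀ i ∈ F, IntegrableOn ((Set.Icc (a i) (a i + δ i)).indicator (fun _ => (1:ℝ))) (Set.Icc r (2*r)) := by
    intro i _
    apply Integrable.integrableOn
    rw [integrable_indicator_iff measurableSet_Icc]
    exact integrableOn_const (by simp)
  have hfi : IntegrableOn f (Set.Icc r (2*r)) := integrable_finsetSum _ hint
  have hv : volume (Set.Icc r (2*r)) = ENNReal.ofReal r := by rw [Real.volume_Icc]; congr 1; ring
  obtain ⟨R, hR, hle⟩ := exists_le_setAverage (μ := volume) (s := Set.Icc r (2*r)) (f := f)
    (by rw [hv]; simpa using hr) (by rw [hv]; simp) hfi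
  refine ⟨R, hR, fun G hG hGJ => ?_⟩
  have h2 : (G.card : ℝ) ≤ f R := by
    calc (G.card : ℝ) = ∑ i ∈ G, (1:ℝ) := by simp
      _ = ∑ i ∈ G, (Set.Icc (a i) (a i + δ i)).indicator (fun _ => (1:ℝ)) R := by
          apply Finset.sum_congr rfl
          intro i hi
          rw [Set.indicator_of_mem (ha i (hGJ i hi))]
      _ ≤ f R := Finset.sum_le_sum_of_subset_of_nonneg hG
          (fun i _ _ => Set.indicator_nonneg (fun _ _ => zero_le_one) _)
  refine h2.trans (hle.trans ?_)
  rw [setAverage_eq, hf, integral_finsetSum _ hint, Finset.smul_sum]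
  apply Finset.sum_le_sum
  intro i _
  have h3 : ∫ x in Set.Icc r (2*r), (Set.Icc (a i) (a i + δ i)).indicator (fun _ => (1:ℝ)) x ≤ δ i := by
    rw [setIntegral_indicator measurableSet_Icc]
    simp only [setIntegral_const, smul_eq_mul, mul_one]
    calc volume.real (Set.Icc r (2*r) ∩ Set.Icc (a i) (a i + δ i)) ≤ volume.real (Set.Icc (a i) (a i + δ i)) :=
          measureReal_mono Set.inter_subset_right (by simp)
      _ = δ i := by rw [Real.volume_real_Icc]; simp [hδ i]
  have h4 : volume.real (Set.Icc r (2*r)) = r := by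
    rw [measureReal_def, hv, ENNReal.toReal_ofReal hr.le]
  rw [h4, smul_eq_mul, inv_mul_eq_div]
  gcongr

lemma aux_sum_step (s : ℝ) (hs0 : 0 < s) (hs : s ≤ 1/2) (m : ℕ) :
    2 * (m:ℝ)^(1-s) + ((m+1:ℕ):ℝ)^(-s) ≤ 2 * ((m+1:ℕ):ℝ)^(1-s) := by
  have hp : (0:ℝ) < ((m+1:ℕ):ℝ) := by positivity
  have h1 := Real.geom_mean_le_arith_mean2_weighted (w₁ := 1-s) (w₂ := s) (p₁ := (m:ℝ)) (p₂ := ((m+1:ℕ):ℝ))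
    (by linarith) hs0.le (by positivity) hp.le (by ring)
  have h2 : ((m+1:ℕ):ℝ)^(1-s) = ((m+1:ℕ):ℝ) * ((m+1:ℕ):ℝ)^(-s) := by
    rw [sub_eq_add_neg, Real.rpow_add hp, Real.rpow_one]
  have h3 : ((m+1:ℕ):ℝ)^s * ((m+1:ℕ):ℝ)^(-s) = 1 := by
    rw [← Real.rpow_add hp]; simp
  have h4 : 0 < ((m+1:ℕ):ℝ)^(-s) := Real.rpow_pos_of_pos hp _
  rw [h2]
  have h5 : (m:ℝ)^(1-s) * ((m+1:ℕ):ℝ)^s ≤ (m:ℝ) + s := by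
    refine h1.trans (le_of_eq ?_); push_cast; ring
  have h6 : (m:ℝ)^(1-s) = (m:ℝ)^(1-s) * ((m+1:ℕ):ℝ)^s * ((m+1:ℕ):ℝ)^(-s) := by
    rw [mul_assoc, h3, mul_one]
  have h7 := mul_le_mul_of_nonneg_right h5 h4.le
  rw [← h6] at h7
  push_cast at *
  nlinarith

lemma aux_sum {ι : Type*} [DecidableEq ι] (d : ℕ) (hd : 2 ≤ d) (K : ℝ) (hK : 0 ≤ K) (w : ι → ℝ)
    (hw : ∀ i, 0 ≤ w i) (F : Finset ι)
    (h : ∀ i ∈ F, ((F.filter (fun j => w i ≤ w j)).card : ℝ) * w i ^ d ≤ K) :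
    ∑ i ∈ F, w i ≤ 2 * K ^ (1/(d:ℝ)) * (F.card : ℝ)^(1 - 1/(d:ℝ)) := by
  induction F using Finset.induction_on_min_value w with
  | empty => simp only [Finset.sum_empty]; positivity
  | insert i s hi hmin ih =>
    have h1 := ih (fun j hj => by
      refine le_trans ?_ (h j (Finset.mem_insert_of_mem hj))
      gcongr
      · exact pow_nonneg (hw j) _
      · exact Finset.subset_insert _ _)
    have h2 := h i (Finset.mem_insert_self _ _)
    have h3 : (insert i s).filter (fun j => w i ≤ w j) = insert i s := by
      apply Finset.filter_true_of_mem
      intro j hj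
      rcases Finset.mem_insert.mp hj with rfl | hj
      · exact le_rfl
      · exact hmin j hj
    rw [h3, Finset.card_insert_of_notMem hi] at h2
    rw [Finset.sum_insert hi, Finset.card_insert_of_notMem hi]
    have hd' : (0:ℝ) < d := by positivity
    have hs : 1/(d:ℝ) ≤ 1/2 := by
      apply one_div_le_one_div_of_le two_pos; exact_mod_cast hd
    have h4 := aux_sum_step (1/(d:ℝ)) (by positivity) hs s.card
    have hp : (0:ℝ) < ((s.card+1:ℕ):ℝ) := by positivity
    have h5 : w i ≤ K^(1/(d:ℝ)) * ((s.card+1:ℕ):ℝ)^(-(1/(d:ℝ))) := by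
      have : w i ^ d ≤ K / ((s.card+1:ℕ):ℝ) := by rw [le_div_iff₀ hp]; linarith
      calc w i = (w i ^ d)^(1/(d:ℝ)) := by
            rw [one_div, Real.pow_rpow_inv_natCast (hw i) (by omega)]
        _ ≤ (K / ((s.card+1:ℕ):ℝ))^(1/(d:ℝ)) := Real.rpow_le_rpow (pow_nonneg (hw i) _) this (by positivity)
        _ = _ := by rw [Real.div_rpow hK hp.le, Real.rpow_neg hp.le, div_eq_mul_inv]
    have hK' : 0 ≤ K^(1/(d:ℝ)) := by positivity
    have := mul_le_mul_of_nonneg_left h4 hK'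
    nlinarith

lemma aux_cover_s5 (d : ℕ) (hd : 1 ≤ d) (c : EuclideanSpace ℝ (Fin d)) (r ε : ℝ) (hr : 0 < r)
    (hε : 0 < ε) (hε1 : ε ≤ 1) :
    ∃ T : Finset (Set (EuclideanSpace ℝ (Fin d))), (T.card : ℝ) ≤ (9*d:ℝ)^d / ε^d ∧
      (∀ b ∈ T, Bornology.IsBounded b ∧ Metric.diam b ≤ ε * r) ∧
      ∀ x ∈ Metric.closedBall c (3*r), ∃ b ∈ T, x ∈ b := by
  classical
  have hd0 : (0:ℝ) < d := by positivity
  set h : ℝ := ε * r / d with hh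
  have hpos : 0 < h := by positivity
  set M : ℕ := ⌈3 * d / ε⌉₊ with hM
  set cell : (Fin d → ℤ) → Set (EuclideanSpace ℝ (Fin d)) :=
    fun z => {x | ∀ i, ⌊(x i - c i) / h⌋ = z i} with hcell
  refine ⟨(Fintype.piFinset (fun _ : Fin d => Finset.Icc (-(M:ℤ)) M)).image cell, ?_, ?_, ?_⟩
  · have h1 : ((Fintype.piFinset (fun _ : Fin d => Finset.Icc (-(M:ℤ)) M)).image cell).card ≤ (2*M+1)^d := by
      refine Finset.card_image_le.trans (le_of_eq ?_)
      simp only [Fintype.card_piFinset_const, Int.card_Icc]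
      congr 1; omega
    have hM1 : (M:ℝ) < 3 * d / ε + 1 := Nat.ceil_lt_add_one (by positivity)
    have h2 : (2*M+1 : ℝ) ≤ 9 * d / ε := by
      have : (1:ℝ) ≤ d / ε := by
        rw [le_div_iff₀ hε]
        have : (1:ℝ) ≤ d := by exact_mod_cast hd
        linarith
      have e1 : 3 * (d:ℝ) / ε = 3 * (d/ε) := by ring
      have e2 : 9 * (d:ℝ) / ε = 9 * (d/ε) := by ring
      rw [e1] at hM1; rw [e2]; linarith
    rw [← div_pow]
    calc _ ≤ (((2*M+1)^d : ℕ) : ℝ) := by exact_mod_cast h1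
      _ = (2*M+1 : ℝ)^d := by push_cast; ring
      _ ≤ _ := by gcongr
  · intro b hb
    obtain ⟨z, hz, rfl⟩ := Finset.mem_image.mp hb
    have key : ∀ x ∈ cell z, ∀ y ∈ cell z, dist x y ≤ ε * r := by
      intro x hx y hy
      have hc : ∀ i, |x i - y i| ≤ h := by
        intro i
        have e := Int.abs_sub_lt_one_of_floor_eq_floor ((hx i).trans (hy i).symm)
        rw [← sub_div, abs_div, abs_of_pos hpos, div_lt_one hpos] at e
        have : x i - c i - (y i - c i) = x i - y i := by ring
        rw [this] at e; exact e.le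
      rw [EuclideanSpace.dist_eq]
      apply Real.sqrt_le_iff.mpr
      refine ⟨by positivity, ?_⟩
      calc ∑ i, dist (x i) (y i)^2 ≤ ∑ i : Fin d, h^2 := by
            apply Finset.sum_le_sum; intro i _
            rw [Real.dist_eq]
            exact pow_le_pow_left₀ (abs_nonneg _) (hc i) 2
        _ = d * h^2 := by simp
        _ ≤ (d*h)^2 := by
            have : (1:ℝ) ≤ d := by exact_mod_cast hd
            have := mul_le_mul_of_nonneg_right this (by positivity : 0 ≤ d * h^2)
            nlinarith
        _ = (ε*r)^2 := by rw [hh]; field_simp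
    refine ⟨Metric.isBounded_iff.mpr ⟨ε*r, fun x hx y hy => key x hx y hy⟩, ?_⟩
    exact Metric.diam_le_of_forall_dist_le (by positivity) key
  · intro x hx
    refine ⟨cell (fun i => ⌊(x i - c i) / h⌋), Finset.mem_image_of_mem _ ?_, fun i => rfl⟩
    rw [Fintype.mem_piFinset]
    intro i
    have h1 : |x i - c i| ≤ 3 * r := by
      have := PiLp.norm_apply_le (x - c) i
      rw [← dist_eq_norm] at this
      exact this.trans hx
    have h2 : |(x i - c i)/h| ≤ M := by
      rw [abs_div, abs_of_pos hpos]
      refine le_trans ?_ (Nat.le_ceil _)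
      rw [div_le_iff₀ hpos]
      have : 3 * d / ε * h = 3 * r := by rw [hh]; field_simp
      linarith
    rw [abs_le] at h2
    rw [Finset.mem_Icc]
    constructor
    · rw [Int.le_floor]; push_cast; exact h2.1
    · have := (Int.floor_le ((x i - c i)/h)).trans h2.2
      exact (Int.cast_le (R := ℝ)).mp (by push_cast; exact this)

lemma aux_radius {ι E : Type*} [MetricSpace E] [Nonempty E] (F : Finset ι) (p : ι → E) (m : ℕ)
    (hm : m ≤ F.card) (hx : ∀ x : E, ∀ G ⊆ F, (∀ i ∈ G, p i = x) → G.card < m) :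
    ∃ (c : E) (r : ℝ), 0 < r ∧ (∃ G ⊆ F, m ≤ G.card ∧ ∀ i ∈ G, p i ∈ Metric.closedBall c r) ∧
      ∀ c' : E, ∀ G ⊆ F, (∀ i ∈ G, p i ∈ Metric.closedBall c' (r/2)) → G.card < m := by
  classical
  by_contra hcon
  push Not at hcon
  have hstep : ∀ r : ℝ, 0 < r → (∃ c : E, ∃ G ⊆ F, m ≤ G.card ∧ ∀ i ∈ G, p i ∈ Metric.closedBall c r) →
      (∃ c : E, ∃ G ⊆ F, m ≤ G.card ∧ ∀ i ∈ G, p i ∈ Metric.closedBall c (r/2)) := by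
    rintro r hr ⟨c, hG⟩
    obtain ⟨c', G', h1, h2, h3⟩ := hcon c r hr hG
    exact ⟨c', G', h1, h3, h2⟩
  obtain ⟨x0⟩ := ‹Nonempty E›
  obtain ⟨S, hS0, hS⟩ : ∃ S : ℝ, 0 < S ∧ ∀ i ∈ F, p i ∈ Metric.closedBall x0 S := by
    obtain ⟨S, hS⟩ := (F.image p).finite_toSet.isBounded.subset_closedBall x0
    refine ⟨max S 1, by positivity, fun i hi => ?_⟩
    exact Metric.closedBall_subset_closedBall (le_max_left _ _) (hS (by simpa using ⟨i, hi, rfl⟩))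
  have hall : ∀ n : ℕ, ∃ c : E, ∃ G ⊆ F, m ≤ G.card ∧ ∀ i ∈ G, p i ∈ Metric.closedBall c (S * (1/2)^n) := by
    intro n
    induction n with
    | zero => exact ⟨x0, F, subset_rfl, hm, by simpa using hS⟩
    | succ n ih =>
      have := hstep _ (by positivity) ih
      rw [pow_succ, ← mul_assoc, mul_one_div]
      exact this
  obtain ⟨δ, hδ0, hδ⟩ : ∃ δ : ℝ, 0 < δ ∧ ∀ i ∈ F, ∀ j ∈ F, dist (p i) (p j) < δ → p i = p j := by
    by_cases hne : ((F ×ˢ F).filter (fun q => p q.1 ≠ p q.2)).Nonempty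
    · obtain ⟨q, hq, hmin⟩ := Finset.exists_min_image _ (fun q : ι × ι => dist (p q.1) (p q.2)) hne
      refine ⟨dist (p q.1) (p q.2), dist_pos.mpr (Finset.mem_filter.mp hq).2, fun i hi j hj hlt => ?_⟩
      by_contra hn
      have := hmin (i, j) (by simp [hi, hj, hn])
      exact absurd hlt (not_lt.mpr this)
    · refine ⟨1, one_pos, fun i hi j hj _ => ?_⟩
      by_contra hn
      exact hne ⟨(i, j), by simp [hi, hj, hn]⟩
  obtain ⟨n, hn⟩ := exists_pow_lt_of_lt_one (by positivity : 0 < δ / (2*S)) (by norm_num : (1/2:ℝ) < 1)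
  obtain ⟨c, G, hGF, hGm, hG⟩ := hall n
  have hm0 : 0 < m := by simpa using hx x0 ∅ (by simp) (by simp)
  obtain ⟨i0, hi0⟩ := Finset.card_pos.mp (hm0.trans_le hGm)
  refine absurd (hx (p i0) G hGF (fun i hi => hδ i (hGF hi) i0 (hGF hi0) ?_)) (not_lt.mpr hGm)
  have h1 := Metric.mem_closedBall.mp (hG i hi)
  have h2 := Metric.mem_closedBall.mp (hG i0 hi0)
  rw [lt_div_iff₀ (by positivity)] at hn
  have := dist_triangle_right (p i) (p i0) c
  linarith

lemma aux_density (d : ℕ) (F : Finset (Set (EuclideanSpace ℝ (Fin d)))) (ρ : ℝ)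
    (h : FamilyDensityLE d (F : Set (Set (EuclideanSpace ℝ (Fin d)))) ρ)
    (b : Set (EuclideanSpace ℝ (Fin d))) (hb : Bornology.IsBounded b)
    (G : Finset (Set (EuclideanSpace ℝ (Fin d)))) (hG : G ⊆ F)
    (hGb : ∀ o ∈ G, (o ∩ b).Nonempty ∧ Metric.diam b ≤ Metric.diam o) : (G.card : ℝ) ≤ ρ := by
  refine le_trans ?_ (h b hb)
  rw [← Set.ncard_coe_finset]
  have : (G : Set (Set (EuclideanSpace ℝ (Fin d)))).ncard ≤ _ :=
    Set.ncard_le_ncard (t := {o ∈ (F : Set (Set (EuclideanSpace ℝ (Fin d)))) |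
      (o ∩ b).Nonempty ∧ Metric.diam b ≤ Metric.diam o})
      (fun o ho => ⟨hG ho, hGb o ho⟩) (F.finite_toSet.subset (fun o ho => ho.1))
  exact_mod_cast this

lemma aux_union {ι β : Type*} (G : Finset ι) (T : Finset β) (q : β → ι → Prop) (B : ℝ)
    (hB : ∀ b ∈ T, ∀ H ⊆ G, (∀ i ∈ H, q b i) → (H.card : ℝ) ≤ B)
    (hc : ∀ i ∈ G, ∃ b ∈ T, q b i) : (G.card : ℝ) ≤ T.card * B := by
  classical
  have h1 : G ⊆ T.biUnion (fun b => G.filter (q b)) := by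
    intro i hi
    obtain ⟨b, hb, hq⟩ := hc i hi
    simp only [Finset.mem_biUnion, Finset.mem_filter]
    exact ⟨b, hb, hi, hq⟩
  calc (G.card : ℝ) ≤ ((∑ b ∈ T, (G.filter (q b)).card : ℕ) : ℝ) := by
        exact_mod_cast (Finset.card_le_card h1).trans Finset.card_biUnion_le
    _ = ∑ b ∈ T, ((G.filter (q b)).card : ℝ) := by push_cast; rfl
    _ ≤ ∑ b ∈ T, B := Finset.sum_le_sum (fun b hb => hB b hb _ (Finset.filter_subset _ _)
        (fun i hi => (Finset.mem_filter.mp hi).2))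
    _ = _ := by simp

/-- Core: family given as a finset; main situation. -/
lemma aux_core (d : ℕ) (hd : 1 ≤ d) (F : Finset (Set (EuclideanSpace ℝ (Fin d)))) (ρ : ℝ) (k : ℕ)
    (hbd : ∀ o ∈ F, Bornology.IsBounded o) (hne : ∀ o ∈ F, o.Nonempty)
    (hρ : FamilyDensityLE d (F : Set (Set (EuclideanSpace ℝ (Fin d)))) ρ)
    (hk : 2 * k ≤ F.card) (hkρ : ρ < 2 * k) (A M : ℝ) (hA : A = (9*d:ℝ)^d) (hM : M = A * 2^d * 2) :
    ∃ (c : EuclideanSpace ℝ (Fin d)) (R : ℝ) (W : ℝ), 0 < R ∧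
      (∀ G ⊆ F, (∀ o ∈ G, (∃ x ∈ o, dist x c ≤ R) ∧ ∃ y ∈ o, R ≤ dist y c) → (G.card : ℝ) ≤ A * ρ + W) ∧
      (∀ G ⊆ F, (∀ o ∈ G, o ⊆ Metric.ball c R) → (G.card : ℝ) ≤ M * k) ∧
      (∃ G ⊆ F, 2 * k ≤ G.card ∧ ∀ o ∈ G, ∃ x ∈ o, dist x c ≤ R) ∧
      (2 ≤ d → W ≤ 2 * (A * ρ) ^ (1/(d:ℝ)) * (M * k) ^ (1 - 1/(d:ℝ))) ∧
      (∀ ε : ℝ, 0 < ε → ε ≤ 1 → W ≤ M * k * ε + A * ρ / ε^d) := by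
  classical
  have hρ0 : 0 ≤ ρ := by
    simpa using aux_density d F ρ hρ ∅ Bornology.isBounded_empty ∅ (by simp) (by simp)
  have hA0 : 0 ≤ A := by rw [hA]; positivity
  have hM0 : 0 ≤ M := by rw [hM]; positivity
  -- representatives
  have hrep : ∀ o : Set (EuclideanSpace ℝ (Fin d)), ∃ x, o ∈ F → x ∈ o := by
    intro o
    by_cases ho : o ∈ F
    · obtain ⟨x, hx⟩ := hne o ho; exact ⟨x, fun _ => hx⟩
    · exact ⟨0, fun h => absurd h ho⟩
  choose p hp using hrep
  obtain ⟨c, r, hr, ⟨G0, hG0F, hG0k, hG0⟩, hsmall⟩ := aux_radius F p (2*k) hk (by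
    intro x G hG hGx
    have := aux_density d F ρ hρ {x} Bornology.isBounded_singleton G hG (fun o ho =>
      ⟨⟨x, hGx o ho ▸ hp o (hG ho), rfl⟩, by simpa using Metric.diam_nonneg⟩)
    have h2 : (G.card : ℝ) < ((2 * k : ℕ) : ℝ) := by push_cast; linarith
    exact_mod_cast h2)
  -- point count in the large ball
  have hcount : ∀ G ⊆ F, (∀ o ∈ G, p o ∈ Metric.closedBall c (3*r)) → (G.card : ℝ) ≤ M * k := by
    intro G hG hGp
    obtain ⟨T, hT, hTb, hTc⟩ := aux_cover_s5 d hd c r (1/2) hr (by norm_num) (by norm_num)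
    have := aux_union G T (fun b o => p o ∈ b) (2*k) (by
      intro b hb H hH hHq
      rcases H.eq_empty_or_nonempty with rfl | ⟨o0, ho0⟩
      · simp
      · have := hsmall (p o0) H (hH.trans hG) (fun o ho => by
          rw [Metric.mem_closedBall]
          have h1 := Metric.dist_le_diam_of_mem (hTb b hb).1 (hHq o ho) (hHq o0 ho0)
          linarith [(hTb b hb).2])
        exact_mod_cast this.le) (fun o ho => hTc _ (hGp o ho))
    refine this.trans ?_
    calc (T.card : ℝ) * (2 * k) ≤ ((9*d:ℝ)^d / (1/2)^d) * (2*k) := by gcongr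
      _ = M * k := by rw [hM, hA, one_div, inv_pow, div_inv_eq_mul]; ring
  -- big objects
  have hbig : ∀ ε : ℝ, 0 < ε → ε ≤ 1 → ∀ G ⊆ F,
      (∀ o ∈ G, (∃ x ∈ o, dist x c ≤ 3*r) ∧ ε * r ≤ Metric.diam o) → (G.card : ℝ) ≤ A * ρ / ε^d := by
    intro ε hε hε1 G hG hGo
    obtain ⟨T, hT, hTb, hTc⟩ := aux_cover_s5 d hd c r ε hr hε hε1
    have := aux_union G T (fun b o => (o ∩ b).Nonempty) ρ (by
      intro b hb H hH hHq
      exact aux_density d F ρ hρ b (hTb b hb).1 H (hH.trans hG)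
        (fun o ho => ⟨hHq o ho, (hTb b hb).2.trans (hGo o (hH ho)).2⟩)) (by
      intro o ho
      obtain ⟨x, hx, hxc⟩ := (hGo o ho).1
      obtain ⟨b, hb, hxb⟩ := hTc x hxc
      exact ⟨b, hb, x, hx, hxb⟩)
    refine this.trans ?_
    calc (T.card : ℝ) * ρ ≤ ((9*d:ℝ)^d / ε^d) * ρ := by gcongr
      _ = A * ρ / ε^d := by rw [hA]; ring
  set S := F.filter (fun o => p o ∈ Metric.closedBall c (3*r) ∧ Metric.diam o < r) with hS
  have hSF : S ⊆ F := Finset.filter_subset _ _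
  have hScard : (S.card : ℝ) ≤ M * k := hcount S hSF (fun o ho => (Finset.mem_filter.mp ho).2.1)
  set w : Set (EuclideanSpace ℝ (Fin d)) → ℝ := fun o => Metric.diam o / r with hw
  have hw0 : ∀ o, 0 ≤ w o := fun o => div_nonneg Metric.diam_nonneg hr.le
  have hSbig : ∀ ε : ℝ, 0 < ε → ε ≤ 1 → ∀ G ⊆ S, (∀ o ∈ G, ε ≤ w o) → (G.card : ℝ) ≤ A * ρ / ε^d := by
    intro ε h0 h1 G hG hGo
    refine hbig ε h0 h1 G (hG.trans hSF) (fun o ho => ⟨⟨p o, hp o (hSF (hG ho)), ?_⟩, ?_⟩)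
    · exact (Finset.mem_filter.mp (hG ho)).2.1
    · exact (le_div_iff₀ hr).mp (hGo o ho)
  obtain ⟨R, hR, hRc⟩ := aux_avg S
    (fun o => {R | Bornology.IsBounded o ∧ (∃ x ∈ o, dist x c ≤ R) ∧ ∃ y ∈ o, R ≤ dist y c})
    (fun o => Metric.diam o) (fun o => Metric.diam_nonneg) (by
      rintro o R1 ⟨hb, -, y, hy, hyR⟩ R2 ⟨-, ⟨x, hx, hxR⟩, -⟩
      have h1 := Metric.dist_le_diam_of_mem hb hy hx
      have h2 := dist_triangle y x c
      linarith) r hr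
  refine ⟨c, R, ∑ o ∈ S, w o, hr.trans_le hR.1, ?_, ?_, ⟨G0, hG0F, hG0k, ?_⟩, ?_, ?_⟩
  · intro G hG hGo
    have h1 := hRc (G.filter (fun o => Metric.diam o < r)) (by
      intro o ho
      obtain ⟨ho, hor⟩ := Finset.mem_filter.mp ho
      refine Finset.mem_filter.mpr ⟨hG ho, ?_, hor⟩
      obtain ⟨x, hx, hxR⟩ := (hGo o ho).1
      have h1 := Metric.dist_le_diam_of_mem (hbd o (hG ho)) (hp o (hG ho)) hx
      have h2 := dist_triangle (p o) x c
      rw [Metric.mem_closedBall]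
      linarith [hR.2]) (fun o ho => by
        have ho := (Finset.mem_filter.mp ho).1
        exact ⟨hbd o (hG ho), hGo o ho⟩)
    have h2 := hbig 1 one_pos le_rfl (G.filter (fun o => ¬ Metric.diam o < r))
      ((Finset.filter_subset _ _).trans hG) (fun o ho => by
        obtain ⟨ho, hor⟩ := Finset.mem_filter.mp ho
        obtain ⟨x, hx, hxR⟩ := (hGo o ho).1
        exact ⟨⟨x, hx, by linarith [hR.2]⟩, by linarith⟩)
    have h3 := Finset.card_filter_add_card_filter_not (s := G) (fun o => Metric.diam o < r)
    rw [one_pow, div_one] at h2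
    rw [← h3]; push_cast; linarith
  · intro G hG hGo
    refine hcount G hG (fun o ho => ?_)
    have := Metric.mem_ball.mp (hGo o ho (hp o (hG ho)))
    rw [Metric.mem_closedBall]; linarith [hR.2]
  · intro o ho
    exact ⟨p o, hp o (hG0F ho), (Metric.mem_closedBall.mp (hG0 o ho)).trans hR.1⟩
  · intro hd2
    have := aux_sum d hd2 (A*ρ) (by positivity) w hw0 S (by
      intro o ho
      rcases (hw0 o).eq_or_lt with h0 | h0
      · rw [← h0, zero_pow (by omega), mul_zero]; positivity
      · have h1 : w o ≤ 1 := by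
          rw [hw]; simp only; rw [div_le_one hr]; exact (Finset.mem_filter.mp ho).2.2.le
        have := hSbig (w o) h0 h1 (S.filter (fun j => w o ≤ w j)) (Finset.filter_subset _ _)
          (fun j hj => (Finset.mem_filter.mp hj).2)
        rwa [le_div_iff₀ (by positivity)] at this)
    refine this.trans ?_
    have : 0 ≤ 1 - 1/(d:ℝ) := by
      have : (1:ℝ) ≤ d := by exact_mod_cast hd
      rw [sub_nonneg, div_le_one (by positivity)]; exact this
    gcongr
  · intro ε h0 h1
    have h2 := hSbig ε h0 h1 (S.filter (fun j => ε ≤ w j)) (Finset.filter_subset _ _)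
          (fun j hj => (Finset.mem_filter.mp hj).2)
    rw [← Finset.sum_filter_add_sum_filter_not S (fun j => ε ≤ w j)]
    have h3 : ∑ o ∈ S.filter (fun j => ε ≤ w j), w o ≤ (S.filter (fun j => ε ≤ w j)).card := by
      rw [Finset.card_eq_sum_ones]; push_cast
      apply Finset.sum_le_sum
      intro o ho
      rw [hw]; simp only; rw [div_le_one hr]
      exact (Finset.mem_filter.mp (Finset.mem_filter.mp ho).1).2.2.le
    have h4 : ∑ o ∈ S.filter (fun j => ¬ ε ≤ w j), w o ≤ S.card * ε := by
      calc _ ≤ ∑ o ∈ S.filter (fun j => ¬ ε ≤ w j), ε := by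
            apply Finset.sum_le_sum
            intro o ho
            exact (not_le.mp (Finset.mem_filter.mp ho).2).le
        _ = (S.filter (fun j => ¬ ε ≤ w j)).card * ε := by simp
        _ ≤ _ := by gcongr; exact Finset.filter_subset _ _
    have h5 := mul_le_mul_of_nonneg_right hScard h0.le
    linarith

lemma aux_ncard {α : Type*} (F : Finset α) (q : α → Prop) :
    ∃ G ⊆ F, (∀ o, o ∈ G ↔ o ∈ F ∧ q o) ∧ {o ∈ (F : Set α) | q o}.ncard = G.card := by
  classical
  refine ⟨F.filter q, Finset.filter_subset _ _, fun o => Finset.mem_filter, ?_⟩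
  rw [← Set.ncard_coe_finset]
  congr 1
  ext o; simp

theorem stmt5 (d : ℕ) (hd : 1 ≤ d) :
    ∃ C : ℝ, 0 < C ∧
      ∀ (O : Set (Set (EuclideanSpace ℝ (Fin d)))) (ρ : ℝ) (n k : ℕ),
        O.Finite → O.ncard = n →
        (∀ o ∈ O, Bornology.IsBounded o) → (∀ o ∈ O, o.Nonempty) →
        FamilyDensityLE d O ρ → 1 ≤ k → k ≤ n →
        ∃ (c : EuclideanSpace ℝ (Fin d)) (R : ℝ), 0 < R ∧
          (({o ∈ O | (o ∩ Metric.sphere c R).Nonempty}.ncard : ℝ)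
              ≤ C * (ρ + ρ ^ (1 / (d : ℝ)) * (k : ℝ) ^ (1 - 1 / (d : ℝ)))) ∧
          (({o ∈ O | o ⊆ Metric.ball c R}.ncard : ℝ) ≤ C * (k : ℝ)) ∧
          ((k : ℝ) - C * (ρ + ρ ^ (1 / (d : ℝ)) * (k : ℝ) ^ (1 - 1 / (d : ℝ)))
              ≤ ({o ∈ O | o ⊆ Metric.ball c R}.ncard : ℝ)) := by
  classical
  obtain ⟨A, hA⟩ : ∃ A : ℝ, A = (9*d:ℝ)^d := ⟨_, rfl⟩
  obtain ⟨M, hM⟩ : ∃ M : ℝ, M = A * 2^d * 2 := ⟨_, rfl⟩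
  have hd1 : (1:ℝ) ≤ d := by exact_mod_cast hd
  have hA1 : 1 ≤ A := by rw [hA]; exact one_le_pow₀ (by linarith)
  have hM1 : 2 ≤ M := by
    rw [hM]
    have : (1:ℝ) ≤ 2^d := one_le_pow₀ (by norm_num)
    nlinarith
  have hAM : 2 ≤ A * M := by nlinarith
  have hAMA : A ≤ A * M := by nlinarith
  have hAMM : M ≤ A * M := by nlinarith
  refine ⟨5 * (A * M), by positivity, ?_⟩
  intro O ρ n k hfin hn hbd hne hρ hk1 hkn
  obtain ⟨F, rfl⟩ := hfin.exists_finset_coe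
  rw [Set.ncard_coe_finset] at hn
  have hρ0 : 0 ≤ ρ := by
    simpa using aux_density d F ρ hρ ∅ Bornology.isBounded_empty ∅ (by simp) (by simp)
  have hk0 : (1:ℝ) ≤ k := by exact_mod_cast hk1
  have hexp : 0 ≤ 1 - 1/(d:ℝ) := by
    rw [sub_nonneg, div_le_one (by positivity)]; exact hd1
  have hQ : 0 ≤ ρ ^ (1 / (d : ℝ)) * (k : ℝ) ^ (1 - 1 / (d : ℝ)) := by positivity
  set Q := ρ ^ (1 / (d : ℝ)) * (k : ℝ) ^ (1 - 1 / (d : ℝ)) with hQdef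
  have hbU : Bornology.IsBounded (⋃ o ∈ F, o) :=
    (Bornology.isBounded_biUnion_finset F).mpr hbd
  have hfar : 0 ≤ 5 * (A * M) * (ρ + Q) := by positivity
  by_cases hcase1 : (2 * k : ℝ) ≤ ρ
  · -- far away ball
    obtain ⟨S, hS⟩ := hbU.subset_closedBall 0
    haveI : Nonempty (Fin d) := ⟨⟨0, hd⟩⟩
    obtain ⟨c, hc⟩ := NormedSpace.exists_lt_norm ℝ (EuclideanSpace ℝ (Fin d)) (S + 1)
    have hout : ∀ o ∈ F, ∀ x ∈ o, 1 < dist x c := by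
      intro o ho x hx
      have h1 : x ∈ Metric.closedBall 0 S := hS (Set.mem_biUnion (by exact ho) hx)
      rw [Metric.mem_closedBall, dist_zero_right] at h1
      have h2 := norm_sub_norm_le c x
      rw [dist_comm, dist_eq_norm]; linarith
    have e1 : {o ∈ (F : Set (Set (EuclideanSpace ℝ (Fin d)))) | (o ∩ Metric.sphere c 1).Nonempty} = ∅ := by
      ext o
      simp only [Set.mem_setOf_eq, Set.mem_empty_iff_false, iff_false]
      rintro ⟨ho, x, hx, hxs⟩
      have := hout o ho x hx
      rw [Metric.mem_sphere] at hxs; linarith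
    have e2 : {o ∈ (F : Set (Set (EuclideanSpace ℝ (Fin d)))) | o ⊆ Metric.ball c 1} = ∅ := by
      ext o
      simp only [Set.mem_setOf_eq, Set.mem_empty_iff_false, iff_false]
      rintro ⟨ho, hsub⟩
      obtain ⟨x, hx⟩ := hne o ho
      have := hout o ho x hx
      have := Metric.mem_ball.mp (hsub hx); linarith
    refine ⟨c, 1, one_pos, ?_, ?_, ?_⟩
    · rw [e1]; simpa using hfar
    · rw [e2]; simp only [Set.ncard_empty, Nat.cast_zero]; positivity
    · rw [e2]; simp only [Set.ncard_empty, Nat.cast_zero]; nlinarith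
  by_cases hcase2 : n < 2 * k
  · -- huge ball
    obtain ⟨S, hS⟩ := hbU.subset_closedBall 0
    have hin : ∀ o ∈ F, ∀ x ∈ o, dist x 0 < max S 0 + 1 := by
      intro o ho x hx
      have h1 : x ∈ Metric.closedBall 0 S := hS (Set.mem_biUnion (by exact ho) hx)
      rw [Metric.mem_closedBall] at h1
      linarith [le_max_left S 0]
    have e1 : {o ∈ (F : Set (Set (EuclideanSpace ℝ (Fin d)))) | (o ∩ Metric.sphere 0 (max S 0 + 1)).Nonempty} = ∅ := by
      ext o
      simp only [Set.mem_setOf_eq, Set.mem_empty_iff_false, iff_false]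
      rintro ⟨ho, x, hx, hxs⟩
      have := hin o ho x hx
      rw [Metric.mem_sphere] at hxs; linarith
    have e2 : {o ∈ (F : Set (Set (EuclideanSpace ℝ (Fin d)))) | o ⊆ Metric.ball 0 (max S 0 + 1)} = F := by
      ext o
      simp only [Set.mem_setOf_eq, and_iff_left_iff_imp]
      intro ho x hx
      exact hin o ho x hx
    have hn2 : (n:ℝ) ≤ 2 * k := by exact_mod_cast hcase2.le
    have hkn' : (k:ℝ) ≤ n := by exact_mod_cast hkn
    refine ⟨0, max S 0 + 1, by positivity, ?_, ?_, ?_⟩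
    · rw [e1]; simpa using hfar
    · rw [e2, Set.ncard_coe_finset, hn]; nlinarith
    · rw [e2, Set.ncard_coe_finset, hn]; linarith
  push Not at hcase1 hcase2
  obtain ⟨c, R, W, hR, hcross, hins, ⟨G0, hG0F, hG0k, hG0⟩, hW2, hW1⟩ :=
    aux_core d hd F ρ k hbd hne hρ (by omega) hcase1 A M hA hM
  obtain ⟨G1, hG1F, hG1, hG1c⟩ := aux_ncard F (fun o => (o ∩ Metric.sphere c R).Nonempty)
  obtain ⟨G2, hG2F, hG2, hG2c⟩ := aux_ncard F (fun o => o ⊆ Metric.ball c R)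
  have hG1b : (G1.card : ℝ) ≤ A * ρ + W := hcross G1 hG1F (fun o ho => by
    obtain ⟨x, hx, hxs⟩ := ((hG1 o).mp ho).2
    rw [Metric.mem_sphere] at hxs
    exact ⟨⟨x, hx, hxs.le⟩, ⟨x, hx, hxs.ge⟩⟩)
  have hG2b : (2 * k : ℝ) ≤ G2.card + (A * ρ + W) := by
    have h1 := hcross (G0 \ G2) (Finset.sdiff_subset.trans hG0F) (fun o ho => by
      obtain ⟨ho0, ho2⟩ := Finset.mem_sdiff.mp ho
      refine ⟨hG0 o ho0, ?_⟩
      by_contra hcon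
      push Not at hcon
      exact ho2 ((hG2 o).mpr ⟨hG0F ho0, fun y hy => hcon y hy⟩))
    have h2 : G0.card ≤ G2.card + (G0 \ G2).card := by
      have := Finset.le_card_sdiff G2 G0
      omega
    have h3 : ((2 * k : ℕ) : ℝ) ≤ G2.card + (G0 \ G2).card := by exact_mod_cast hG0k.trans h2
    push_cast at h3
    linarith
  have hρAM : A * ρ ≤ A * M * ρ := mul_le_mul_of_nonneg_right hAMA hρ0
  have hQAM : 0 ≤ A * M * Q := by positivity
  have hρAM0 : 0 ≤ A * M * ρ := by positivity
  have hins2 : ((G2.card : ℕ) : ℝ) ≤ 5 * (A * M) * k := by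
    have := hins G2 hG2F (fun o ho => ((hG2 o).mp ho).2)
    nlinarith
  refine ⟨c, R, hR, ?_⟩
  rw [hG1c, hG2c]
  rcases Nat.lt_or_ge d 2 with hlt | hge
  · -- dimension one
    obtain rfl : d = 1 := by omega
    have hw := hW1 (1/M) (by positivity) (by rw [div_le_one (by positivity)]; linarith)
    have hw' : W ≤ k + A * M * ρ := by
      refine hw.trans (le_of_eq ?_)
      field_simp
    refine ⟨?_, hins2, by linarith⟩
    have h1 := aux_union G1 ({c + EuclideanSpace.single 0 R, c - EuclideanSpace.single 0 R} : Finset _)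
      (fun b o => b ∈ o) ρ (by
        intro b _ H hH hHb
        exact aux_density 1 F ρ hρ {b} Bornology.isBounded_singleton H (hH.trans hG1F)
          (fun o ho => ⟨⟨b, hHb o ho, rfl⟩, by simpa using Metric.diam_nonneg⟩)) (by
        intro o ho
        obtain ⟨x, hx, hxs⟩ := ((hG1 o).mp ho).2
        rw [Metric.mem_sphere, EuclideanSpace.dist_eq] at hxs
        simp only [Finset.univ_unique, Fin.default_eq_zero, Finset.sum_singleton, Real.dist_eq,
          Real.sqrt_sq_eq_abs, abs_abs] at hxs
        rcases (abs_eq hR.le).mp hxs with h | h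
        · refine ⟨x, ?_, hx⟩
          have : x = c + EuclideanSpace.single 0 R := by
            ext i; fin_cases i; simp; linarith
          simp [← this]
        · refine ⟨x, ?_, hx⟩
          have : x = c - EuclideanSpace.single 0 R := by
            ext i; fin_cases i; simp; linarith
          simp [← this])
    have h2 : ((({c + EuclideanSpace.single 0 R, c - EuclideanSpace.single 0 R} :
        Finset (EuclideanSpace ℝ (Fin 1))).card : ℕ) : ℝ) ≤ 2 := by exact_mod_cast Finset.card_le_two
    have h3 := mul_le_mul_of_nonneg_right h2 hρ0
    have h4 := mul_le_mul_of_nonneg_right hAM hρ0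
    linarith
  · have hw := hW2 hge
    have hs0 : 0 ≤ 1 / (d:ℝ) := by positivity
    have hs1 : 1 / (d:ℝ) ≤ 1 := by linarith
    have hw' : W ≤ 2 * (A * M * Q) := by
      refine hw.trans ?_
      rw [Real.mul_rpow (by positivity) hρ0, Real.mul_rpow (by positivity) (by positivity)]
      have a1 : A ^ (1/(d:ℝ)) ≤ A := by
        simpa using Real.rpow_le_rpow_of_exponent_le hA1 hs1
      have a2 : M ^ (1 - 1/(d:ℝ)) ≤ M := by
        simpa using Real.rpow_le_rpow_of_exponent_le (by linarith : 1 ≤ M) (by linarith : 1 - 1/(d:ℝ) ≤ 1)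
      have a3 : A ^ (1/(d:ℝ)) * M ^ (1 - 1/(d:ℝ)) ≤ A * M := by gcongr
      calc _ = 2 * ((A ^ (1/(d:ℝ)) * M ^ (1 - 1/(d:ℝ))) * Q) := by rw [hQdef]; ring
        _ ≤ _ := by gcongr
    refine ⟨by linarith, hins2, by linarith⟩
end

section
/- There exist constants C > 0 and c ∈ (0,1), depending only on d, such that the following holds: for every finite family O of n bounded nonempty objects in ℝ^d with density ρ and every weight function w: O → ℝ_{≥0} with total weight W = Σ_{o ∈ O} w(o), there exists a (d−1)-dimensional sphere S in ℝ^d such that at most C·(ρ + ρ^{1/d}·n^{1−1/d}) objects of O intersect S, the total weight of the objects of O lying strictly inside S is at most c·W, and the total weight of the objects of O lying strictly outside S is at most c·W. -/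
/- STATEMENT 6: weighted separator theorem for low-density families.  There are constants
`C > 0` and `c ∈ (0,1)`, depending only on `d`, such that for every finite family of `n`
objects of density `ρ` with nonnegative weights summing to `W`, there is a sphere that
intersects at most `C(ρ + ρ^{1/d} n^{1-1/d})` objects, and the objects strictly inside
(resp. strictly outside) have total weight at most `c·W`. -/
lemma cover_aux (d : ℕ) (hd : 1 ≤ d) (x : EuclideanSpace ℝ (Fin d)) (r t : ℝ) (ht : 0 < t)
    (htr : t ≤ r) : ∃ (g : EuclideanSpace ℝ (Fin d) → (Fin d → ℤ)) (T : Finset (Fin d → ℤ)),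
      (T.card : ℝ) ≤ (4 * d + 3 : ℝ) ^ d * (r / t) ^ d ∧
      (∀ y ∈ Metric.closedBall x (2 * r), g y ∈ T) ∧ ∀ y z, g y = g z → dist y z ≤ t := by
  have hd' : (1 : ℝ) ≤ d := by exact_mod_cast hd
  have hr : 0 < r := ht.trans_le htr
  set N : ℕ := ⌈2 * r * (d / t)⌉₊ with hN
  have hN1 : 2 * r * (d / t) ≤ N := Nat.le_ceil _
  have hN2 : (N : ℝ) < 2 * r * (d / t) + 1 := Nat.ceil_lt_add_one (by positivity)
  have h1 : 1 ≤ r / t := by rwa [one_le_div ht]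
  refine ⟨fun y i => ⌊(y i - x i) * (d / t)⌋, Fintype.piFinset (fun _ => Finset.Icc (-N : ℤ) N),
    ?_, ?_, ?_⟩
  · rw [Fintype.card_piFinset_const, ← mul_pow]
    push_cast
    refine pow_le_pow_left₀ (by positivity) ?_ _
    have : (Finset.Icc (-N : ℤ) N).card = 2 * N + 1 := by simp; omega
    rw [this]; push_cast
    have e : 2 * r * (d / t) = 2 * d * (r / t) := by ring
    rw [e] at hN2
    nlinarith
  · intro y hy
    rw [Fintype.mem_piFinset]
    intro i
    have h2 : |y i - x i| ≤ 2 * r := by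
      have := PiLp.norm_apply_le (y - x) i
      rw [Metric.mem_closedBall, dist_eq_norm] at hy
      exact this.trans hy
    obtain ⟨h3, h4⟩ := abs_le.1 h2
    have hp : 0 < d / t := by positivity
    rw [Finset.mem_Icc]
    constructor
    · rw [Int.le_floor]; push_cast; nlinarith
    · have := Int.floor_le ((y i - x i) * (d / t))
      have h5 : ((⌊(y i - x i) * (d / t)⌋ : ℤ) : ℝ) ≤ ((N : ℤ) : ℝ) := by push_cast; nlinarith
      exact_mod_cast h5
  · intro y z h
    have h1 : ∀ i, dist (y i) (z i) ≤ t / d := by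
      intro i
      have := Int.abs_sub_lt_one_of_floor_eq_floor (congrFun h i)
      rw [Real.dist_eq]
      have e : (y i - x i) * (d / t) - (z i - x i) * (d / t) = (y i - z i) * (d / t) := by ring
      rw [e, abs_mul, abs_of_pos (show (0:ℝ) < d / t by positivity), ← lt_div_iff₀ (by positivity)] at this
      simpa using this.le
    rw [EuclideanSpace.dist_eq]
    apply Real.sqrt_le_iff.2 ⟨ht.le, ?_⟩
    calc ∑ i, dist (y i) (z i) ^ 2 ≤ ∑ i : Fin d, (t / d) ^ 2 :=
          Finset.sum_le_sum fun i _ => pow_le_pow_left₀ dist_nonneg (h1 i) 2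
      _ = t ^ 2 / d := by simp; field_simp
      _ ≤ t ^ 2 := div_le_self (by positivity) hd'

open Classical in
lemma count_aux (d : ℕ) (hd : 1 ≤ d) (O : Finset (Set (EuclideanSpace ℝ (Fin d)))) (ρ : ℝ)
    (hρ : FamilyDensityLE d (↑O) ρ) (x : EuclideanSpace ℝ (Fin d)) (r t : ℝ) (ht : 0 < t)
    (htr : t ≤ r) :
    ((O.filter fun o => (o ∩ Metric.closedBall x (2 * r)).Nonempty ∧ t ≤ Metric.diam o).card : ℝ)
      ≤ (4 * d + 3 : ℝ) ^ d * ρ * (r / t) ^ d := by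
  obtain ⟨g, T, hT, hg, hdist⟩ := cover_aux d hd x r t ht htr
  have hρ0 : 0 ≤ ρ := le_trans (by positivity) (hρ ∅ Bornology.isBounded_empty)
  let b : (Fin d → ℤ) → Set (EuclideanSpace ℝ (Fin d)) := fun k => {y | g y = k}
  have hb : ∀ k, ((O.filter fun o => (o ∩ b k).Nonempty ∧ t ≤ Metric.diam o).card : ℝ) ≤ ρ := by
    intro k
    have hbd : Bornology.IsBounded (b k) :=
      Metric.isBounded_iff.2 ⟨t, fun y hy z hz => hdist y z (hy.trans hz.symm)⟩
    have hdm : Metric.diam (b k) ≤ t :=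
      Metric.diam_le_of_forall_dist_le ht.le fun y hy z hz => hdist y z (hy.trans hz.symm)
    refine le_trans ?_ (hρ (b k) hbd)
    rw [← Set.ncard_coe_finset, Nat.cast_le]
    apply Set.ncard_le_ncard
    · intro o ho
      simp only [Finset.coe_filter, Set.mem_ofPred_eq] at ho
      exact ⟨ho.1, ho.2.1, hdm.trans ho.2.2⟩
    · exact O.finite_toSet.subset fun o ho => ho.1
  have hsub : (O.filter fun o => (o ∩ Metric.closedBall x (2 * r)).Nonempty ∧ t ≤ Metric.diam o) ⊆
      T.biUnion fun k => O.filter fun o => (o ∩ b k).Nonempty ∧ t ≤ Metric.diam o := by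
    intro o ho
    rw [Finset.mem_filter] at ho
    obtain ⟨ho, ⟨y, hy, hy'⟩, hto⟩ := ho
    rw [Finset.mem_biUnion]
    exact ⟨g y, hg y hy', Finset.mem_filter.2 ⟨ho, ⟨y, hy, rfl⟩, hto⟩⟩
  calc _ ≤ ((∑ k ∈ T, (O.filter fun o => (o ∩ b k).Nonempty ∧ t ≤ Metric.diam o).card : ℕ) : ℝ) := by
        exact_mod_cast (Finset.card_le_card hsub).trans Finset.card_biUnion_le
    _ ≤ ∑ k ∈ T, ρ := by push_cast; exact Finset.sum_le_sum fun k _ => hb k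
    _ = T.card * ρ := by simp
    _ ≤ ((4 * d + 3 : ℝ) ^ d * (r / t) ^ d) * ρ := by gcongr
    _ = _ := by ring

lemma sum_aux {α : Type*} (d : ℕ) (hd : 2 ≤ d) (f : α → ℝ) (A : ℝ) (hA : 0 ≤ A) (m : ℕ) :
    ∀ S : Finset α, S.card = m → (∀ a ∈ S, 0 ≤ f a) →
      (∀ t, 0 < t → ((S.filter fun a => t ≤ f a).card : ℝ) * t ^ d ≤ A) →
      ∑ a ∈ S, f a ≤ 2 * (A ^ (1 / (d : ℝ)) * (m : ℝ) ^ (1 - 1 / (d : ℝ))) := by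
  classical
  have hd' : (2 : ℝ) ≤ d := by exact_mod_cast hd
  induction m with
  | zero =>
    intro S hS _ _
    rw [Finset.card_eq_zero] at hS
    subst hS
    simp; positivity
  | succ m ih =>
    intro S hS hf h
    obtain ⟨a, ha, hmin⟩ := S.exists_min_image f (Finset.card_pos.1 (by omega))
    have h1 := ih (S.erase a) (by rw [Finset.card_erase_of_mem ha, hS]; rfl)
      (fun b hb => hf b (Finset.mem_of_mem_erase hb)) (fun t ht => by
        refine le_trans ?_ (h t ht)
        gcongr
        exact Finset.erase_subset _ _)
    rw [← Finset.add_sum_erase S f ha]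
    set q : ℝ := 1 / (d : ℝ) with hq
    have hq0 : 0 < q := by positivity
    have hq1 : q ≤ 1 / 2 := by rw [hq]; exact one_div_le_one_div_of_le (by norm_num) hd'
    set M : ℝ := ((m + 1 : ℕ) : ℝ) with hM
    have hM0 : 0 < M := by positivity
    have h2 : f a ≤ A ^ q * M ^ (-q) := by
      rcases (hf a ha).eq_or_lt with h0 | h0
      · rw [← h0]; positivity
      · have h3 := h (f a) h0
        rw [Finset.filter_true_of_mem (fun b hb => hmin b hb), hS] at h3
        have h4 : f a ^ d ≤ A / M := by rw [le_div_iff₀ hM0]; linarith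
        have h5 : f a = (f a ^ d) ^ q := by
          rw [hq, one_div, Real.pow_rpow_inv_natCast h0.le (by omega)]
        rw [h5, Real.rpow_neg hM0.le, ← div_eq_mul_inv, ← Real.div_rpow hA hM0.le]
        gcongr
    have h6 : (m : ℝ) ^ (1 - q) ≤ M ^ (1 - q) - (1 - q) * M ^ (-q) := by
      have hb := rpow_one_add_le_one_add_mul_self (s := -1 / M)
        (by rw [le_div_iff₀ hM0, hM]; push_cast; linarith [(Nat.cast_nonneg m : (0:ℝ) ≤ m)])
        (p := 1 - q) (by linarith) (by linarith)
      have e1 : (m : ℝ) = M * (1 + -1 / M) := by field_simp; rw [hM]; push_cast; ring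
      have e2 : (0:ℝ) ≤ 1 + -1 / M := by
        have : 0 ≤ (m : ℝ) / M := by positivity
        rw [e1] at this
        rwa [mul_div_cancel_left₀ _ hM0.ne'] at this
      rw [e1, Real.mul_rpow hM0.le e2]
      have e3 : M ^ (-q) = M ^ (1 - q) / M := by
        rw [← Real.rpow_sub_one hM0.ne']; ring_nf
      calc _ ≤ M ^ (1 - q) * (1 + (1 - q) * (-1 / M)) := by gcongr
        _ = _ := by rw [e3]; ring
    have hx : 0 ≤ A ^ q := by positivity
    have hy : 0 ≤ M ^ (-q) := by positivity
    have h7 : 2 * (m : ℝ) ^ (1 - q) + M ^ (-q) ≤ 2 * M ^ (1 - q) := by nlinarith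
    nlinarith [mul_le_mul_of_nonneg_left h7 hx]

open Classical MeasureTheory in
lemma avg_aux {α : Type*} (S : Finset α) (a D : α → ℝ) (hD : ∀ i ∈ S, 0 ≤ D i) (r : ℝ) (hr : 0 < r) :
    ∃ R ∈ Set.Icc r (2 * r), ((S.filter fun i => R ∈ Set.Icc (a i) (a i + D i)).card : ℝ) ≤
      (∑ i ∈ S, D i) / r := by
  let f : ℝ → ℝ := fun R => ∑ i ∈ S, (Set.Icc (a i) (a i + D i)).indicator (fun _ => (1:ℝ)) R
  have hv : volume (Set.Icc r (2 * r)) = ENNReal.ofReal r := by rw [Real.volume_Icc]; ring_nf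
  have hint : ∀ i ∈ S, IntegrableOn ((Set.Icc (a i) (a i + D i)).indicator (fun _ => (1:ℝ)))
      (Set.Icc r (2 * r)) := by
    intro i _
    apply Integrable.indicator _ measurableSet_Icc
    exact integrableOn_const (by rw [hv]; simp)
  have hf : IntegrableOn f (Set.Icc r (2 * r)) := integrable_finsetSum _ hint
  obtain ⟨R, hR, hle⟩ := exists_le_setAverage (μ := volume) (s := Set.Icc r (2 * r)) (f := f)
    (by rw [hv]; simpa using hr) (by rw [hv]; simp) hf
  refine ⟨R, hR, ?_⟩
  have e : f R = ((S.filter fun i => R ∈ Set.Icc (a i) (a i + D i)).card : ℝ) := by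
    simp only [f, Set.indicator_apply, Finset.sum_boole]
  rw [← e]
  refine hle.trans ?_
  rw [setAverage_eq, measureReal_def, hv, ENNReal.toReal_ofReal hr.le, smul_eq_mul, inv_mul_eq_div]
  gcongr
  rw [integral_finsetSum _ hint]
  refine Finset.sum_le_sum fun i hi => ?_
  rw [setIntegral_indicator measurableSet_Icc]
  simp only [setIntegral_const, smul_eq_mul, mul_one]
  calc _ ≤ volume.real (Set.Icc (a i) (a i + D i)) :=
        measureReal_mono Set.inter_subset_right (by simp)
    _ = D i := by simp [hD i hi]

open Classical in
lemma one_dim_aux (O : Finset (Set (EuclideanSpace ℝ (Fin 1)))) (ρ : ℝ)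
    (hρ : FamilyDensityLE 1 (↑O) ρ) (x : EuclideanSpace ℝ (Fin 1)) (R : ℝ) :
    ({o ∈ (O : Set (Set (EuclideanSpace ℝ (Fin 1)))) |
              (o ∩ Metric.sphere x R).Nonempty}.ncard : ℝ) ≤ ρ + ρ := by
  have h := fun q : EuclideanSpace ℝ (Fin 1) => hρ {q} Bornology.isBounded_singleton
  set e : EuclideanSpace ℝ (Fin 1) := EuclideanSpace.single 0 R with he
  refine le_trans ?_ (add_le_add (h (x + e)) (h (x - e)))
  rw [← Nat.cast_add, Nat.cast_le]
  refine le_trans (Set.ncard_le_ncard ?_ ?_) (Set.ncard_union_le _ _)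
  · rintro o ⟨ho, y, hy, hy'⟩
    have h1 : |y 0 - x 0| = R := by
      rw [Metric.mem_sphere, EuclideanSpace.dist_eq] at hy'
      simpa [Real.dist_eq, Real.sqrt_sq_eq_abs] using hy'
    rcases abs_choice (y 0 - x 0) with h2 | h2
    · left
      have : y = x + e := by
        ext i; fin_cases i; simp [he]; linarith
      exact ⟨ho, ⟨y, hy, this⟩, by simp [Metric.diam_nonneg]⟩
    · right
      have : y = x - e := by
        ext i; fin_cases i; simp [he]; linarith
      exact ⟨ho, ⟨y, hy, this⟩, by simp [Metric.diam_nonneg]⟩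
  · exact (O.finite_toSet.subset fun o ho => ho.1).union (O.finite_toSet.subset fun o ho => ho.1)

open Classical in
lemma sep_aux (d : ℕ) (hd : 1 ≤ d) (O : Finset (Set (EuclideanSpace ℝ (Fin d)))) (ρ : ℝ)
    (hb : ∀ o ∈ O, Bornology.IsBounded o)
    (hρ : FamilyDensityLE d (↑O) ρ) (x : EuclideanSpace ℝ (Fin d)) (r : ℝ) (hr : 0 < r) :
    ∃ R ∈ Set.Icc r (2 * r), (({o ∈ (O : Set (Set (EuclideanSpace ℝ (Fin d)))) |
              (o ∩ Metric.sphere x R).Nonempty}.ncard : ℝ)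
            ≤ (2 * (4 * d + 3 : ℝ) ^ d) *
              (ρ + ρ ^ (1 / (d : ℝ)) * (O.card : ℝ) ^ (1 - 1 / (d : ℝ)))) := by
  have hρ0 : 0 ≤ ρ := le_trans (by positivity) (hρ ∅ Bornology.isBounded_empty)
  have hK : (1 : ℝ) ≤ (4 * d + 3 : ℝ) ^ d :=
    one_le_pow₀ (by linarith [(Nat.cast_nonneg d : (0:ℝ) ≤ d)])
  rcases hd.eq_or_lt with rfl | hd2
  · refine ⟨r, ⟨le_rfl, by linarith⟩, (one_dim_aux O ρ hρ x r).trans ?_⟩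
    simp
    nlinarith
  set K : ℝ := (4 * d + 3 : ℝ) ^ d with hKdef
  set S := O.filter fun o => (o ∩ Metric.closedBall x (2 * r)).Nonempty ∧ Metric.diam o < r with hS
  set B := O.filter fun o => (o ∩ Metric.closedBall x (2 * r)).Nonempty ∧ r ≤ Metric.diam o with hB
  have hBc : (B.card : ℝ) ≤ K * ρ := by
    have := count_aux d hd O ρ hρ x r r hr le_rfl
    rwa [div_self hr.ne', one_pow, mul_one] at this
  have hsum : ∑ o ∈ S, Metric.diam o ≤
      2 * ((K * ρ * r ^ d) ^ (1 / (d : ℝ)) * (S.card : ℝ) ^ (1 - 1 / (d : ℝ))) := by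
    refine sum_aux d hd2 _ _ (by positivity) _ S rfl (fun o _ => Metric.diam_nonneg) ?_
    intro t ht
    rcases le_or_gt t r with htr | htr
    · have h1 := count_aux d hd O ρ hρ x r t ht htr
      have h2 : (S.filter fun o => t ≤ Metric.diam o).card ≤
          (O.filter fun o => (o ∩ Metric.closedBall x (2 * r)).Nonempty ∧ t ≤ Metric.diam o).card := by
        apply Finset.card_le_card
        intro o ho
        simp only [hS, Finset.mem_filter] at ho ⊢
        exact ⟨ho.1.1, ho.1.2.1, ho.2⟩
      calc _ ≤ (K * ρ * (r / t) ^ d) * t ^ d := by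
            gcongr
            exact le_trans (by exact_mod_cast h2) h1
        _ = K * ρ * r ^ d := by rw [div_pow]; field_simp
    · have : (S.filter fun o => t ≤ Metric.diam o) = ∅ := by
        apply Finset.filter_eq_empty_iff.2
        intro o ho
        simp only [hS, Finset.mem_filter] at ho
        linarith [ho.2.2]
      rw [this]; simp; positivity
  obtain ⟨R, hR, hcard⟩ := avg_aux S (fun o => sInf ((fun y => dist y x) '' o)) Metric.diam
    (fun o _ => Metric.diam_nonneg) r hr
  refine ⟨R, hR, ?_⟩
  set S' := S.filter fun o => R ∈ Set.Icc (sInf ((fun y => dist y x) '' o))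
    (sInf ((fun y => dist y x) '' o) + Metric.diam o) with hS'
  have hsub : {o ∈ (O : Set (Set (EuclideanSpace ℝ (Fin d)))) |
              (o ∩ Metric.sphere x R).Nonempty} ⊆ ((B ∪ S' : Finset _) : Set (Set _)) := by
    rintro o ⟨ho, y, hy, hy'⟩
    have ho : o ∈ O := ho
    rw [Metric.mem_sphere] at hy'
    have hyb : y ∈ Metric.closedBall x (2 * r) := by rw [Metric.mem_closedBall, hy']; exact hR.2
    rw [Finset.mem_coe, Finset.mem_union]
    rcases le_or_gt r (Metric.diam o) with h | h
    · left; exact Finset.mem_filter.2 ⟨ho, ⟨y, hy, hyb⟩, h⟩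
    · right
      refine Finset.mem_filter.2 ⟨Finset.mem_filter.2 ⟨ho, ⟨y, hy, hyb⟩, h⟩, ?_, ?_⟩
      · rw [← hy']
        exact csInf_le ⟨0, by rintro _ ⟨z, _, rfl⟩; exact dist_nonneg⟩ ⟨y, hy, rfl⟩
      · rw [← sub_le_iff_le_add]
        apply le_csInf (Set.Nonempty.image _ ⟨y, hy⟩)
        rintro _ ⟨z, hz, rfl⟩
        have h1 := Metric.dist_le_diam_of_mem (hb o ho) hy hz
        have h2 := dist_triangle y z x
        simp only
        linarith
  have h1 : ({o ∈ (O : Set (Set (EuclideanSpace ℝ (Fin d)))) |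
              (o ∩ Metric.sphere x R).Nonempty}.ncard : ℝ) ≤ B.card + S'.card := by
    have := Set.ncard_le_ncard hsub (Finset.finite_toSet _)
    rw [Set.ncard_coe_finset] at this
    exact_mod_cast this.trans (Finset.card_union_le _ _)
  have hq0 : (0:ℝ) < 1 / (d : ℝ) := by positivity
  have hq1 : 1 / (d : ℝ) ≤ 1 := by
    rw [div_le_one (by positivity)]; exact_mod_cast hd
  have h2 : (S'.card : ℝ) ≤ 2 * K * (ρ ^ (1 / (d : ℝ)) * (O.card : ℝ) ^ (1 - 1 / (d : ℝ))) := by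
    refine hcard.trans ?_
    rw [div_le_iff₀ hr]
    refine hsum.trans ?_
    have e : (r ^ d) ^ (1 / (d : ℝ)) = r := by
      rw [one_div, Real.pow_rpow_inv_natCast hr.le (by omega)]
    rw [Real.mul_rpow (by positivity) (by positivity), Real.mul_rpow (by positivity) hρ0, e]
    have h3 : K ^ (1 / (d : ℝ)) ≤ K := by
      conv_rhs => rw [← Real.rpow_one K]
      exact Real.rpow_le_rpow_of_exponent_le hK hq1
    have h4 : (S.card : ℝ) ^ (1 - 1 / (d : ℝ)) ≤ (O.card : ℝ) ^ (1 - 1 / (d : ℝ)) := by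
      apply Real.rpow_le_rpow (by positivity) _ (by linarith)
      exact_mod_cast Finset.card_le_card (Finset.filter_subset _ _)
    calc _ ≤ 2 * (K * ρ ^ (1 / (d : ℝ)) * r * (O.card : ℝ) ^ (1 - 1 / (d : ℝ))) := by gcongr
      _ = _ := by ring
  nlinarith [mul_nonneg (by linarith : 0 ≤ K) hρ0]

open Classical Filter Topology in
lemma degen_aux (d : ℕ) (hd : 1 ≤ d) (O : Finset (Set (EuclideanSpace ℝ (Fin d)))) (ρ : ℝ)
    (hb : ∀ o ∈ O, Bornology.IsBounded o)
    (hρ : FamilyDensityLE d (↑O) ρ) (p : EuclideanSpace ℝ (Fin d)) :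
    ∃ (ctr : EuclideanSpace ℝ (Fin d)) (R : ℝ), 0 < R ∧ p ∈ Metric.sphere ctr R ∧
      ({o ∈ (O : Set (Set (EuclideanSpace ℝ (Fin d)))) |
              (o ∩ Metric.sphere ctr R).Nonempty}.ncard : ℝ) ≤ ρ + 1 := by
  have hev : ∀ᶠ R : ℝ in 𝓝[>] 0, ∀ o ∈ O, o = {p} ∨
      ((o ∩ Metric.closedBall p (2 * R)).Nonempty → 2 * R ≤ Metric.diam o) := by
    rw [Filter.eventually_all_finset]
    intro o ho
    have key : ∀ δ : ℝ, 0 < δ → ∀ᶠ R : ℝ in 𝓝[>] 0, 2 * R < δ := by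
      intro δ hδ
      filter_upwards [Ioo_mem_nhdsGT (show (0:ℝ) < δ / 2 by linarith)] with R hR
      linarith [hR.2]
    rcases (Metric.diam_nonneg (s := o)).eq_or_lt with h0 | h0
    · by_cases hop : o = {p}
      · exact Eventually.of_forall fun _ => Or.inl hop
      have hpn : ∀ y ∈ o, ∀ z ∈ o, y = z := by
        intro y hy z hz
        have := Metric.dist_le_diam_of_mem (hb o ho) hy hz
        rw [← h0] at this
        exact dist_le_zero.1 this
      by_cases hne : o.Nonempty
      · obtain ⟨q, hq⟩ := hne
        have hqp : q ≠ p := by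
          rintro rfl
          exact hop (Set.eq_singleton_iff_unique_mem.2 ⟨hq, fun y hy => hpn y hy q hq⟩)
        filter_upwards [key _ (dist_pos.2 hqp)] with R hR
        right
        rintro ⟨y, hy, hy'⟩
        rw [hpn y hy q hq, Metric.mem_closedBall] at hy'
        linarith
      · exact Eventually.of_forall fun _ => Or.inr fun h => (hne (h.mono Set.inter_subset_left)).elim
    · filter_upwards [key _ h0] with R hR
      exact Or.inr fun _ => hR.le
  obtain ⟨R, hR, hR0⟩ := (hev.and self_mem_nhdsWithin).exists
  have hR0 : 0 < R := hR0
  set e : EuclideanSpace ℝ (Fin d) := EuclideanSpace.single ⟨0, hd⟩ R with he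
  have hen : ‖e‖ = R := by rw [he]; simp [abs_of_pos hR0]
  have hp : p ∈ Metric.sphere (p + e) R := by
    rw [Metric.mem_sphere, dist_comm, dist_eq_norm]; simpa using hen
  refine ⟨p + e, R, hR0, hp, ?_⟩
  have hdm : Metric.diam (Metric.sphere (p + e) R) ≤ 2 * R :=
    (Metric.diam_mono Metric.sphere_subset_closedBall Metric.isBounded_closedBall).trans
      (Metric.diam_closedBall hR0.le)
  have hsub : {o ∈ (O : Set (Set (EuclideanSpace ℝ (Fin d)))) |
      (o ∩ Metric.sphere (p + e) R).Nonempty} ⊆ insert {p}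
      {o ∈ (O : Set (Set (EuclideanSpace ℝ (Fin d)))) | (o ∩ Metric.sphere (p + e) R).Nonempty ∧
        Metric.diam (Metric.sphere (p + e) R) ≤ Metric.diam o} := by
    rintro o ⟨ho, hne⟩
    rcases hR o ho with h | h
    · left; exact h
    · right
      refine ⟨ho, hne, hdm.trans (h ?_)⟩
      obtain ⟨y, hy, hy'⟩ := hne
      refine ⟨y, hy, ?_⟩
      rw [Metric.mem_closedBall]
      rw [Metric.mem_sphere] at hy' hp
      have := dist_triangle_right y p (p + e)
      linarith
  have hfin : {o ∈ (O : Set (Set (EuclideanSpace ℝ (Fin d)))) |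
      (o ∩ Metric.sphere (p + e) R).Nonempty ∧
        Metric.diam (Metric.sphere (p + e) R) ≤ Metric.diam o}.Finite :=
    O.finite_toSet.subset fun o ho => ho.1
  have h1 := (Set.ncard_le_ncard hsub (hfin.insert _)).trans (Set.ncard_insert_le _ _)
  have h2 := hρ _ (Metric.isBounded_sphere (x := p + e) (r := R))
  have h3 : (_ : ℝ) ≤ ((_ + 1 : ℕ) : ℝ) := Nat.cast_le.2 h1
  push_cast at h3
  linarith

open Classical in
theorem stmt6 (d : ℕ) (hd : 1 ≤ d) :
    ∃ C : ℝ, 0 < C ∧ ∃ c : ℝ, 0 < c ∧ c < 1 ∧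
      ∀ (O : Finset (Set (EuclideanSpace ℝ (Fin d)))) (ρ : ℝ) (n : ℕ)
        (w : Set (EuclideanSpace ℝ (Fin d)) → ℝ),
        O.card = n →
        (∀ o ∈ O, Bornology.IsBounded o) → (∀ o ∈ O, o.Nonempty) →
        (∀ o ∈ O, 0 ≤ w o) →
        FamilyDensityLE d (↑O) ρ →
        ∃ (ctr : EuclideanSpace ℝ (Fin d)) (R : ℝ), 0 < R ∧
          (({o ∈ (O : Set (Set (EuclideanSpace ℝ (Fin d)))) |
              (o ∩ Metric.sphere ctr R).Nonempty}.ncard : ℝ)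
            ≤ C * (ρ + ρ ^ (1 / (d : ℝ)) * (n : ℝ) ^ (1 - 1 / (d : ℝ)))) ∧
          ((∑ o ∈ O, if o ⊆ Metric.ball ctr R then w o else 0) ≤ c * ∑ o ∈ O, w o) ∧
          ((∑ o ∈ O, if Disjoint o (Metric.closedBall ctr R) then w o else 0)
            ≤ c * ∑ o ∈ O, w o) := by
  have hK : (1 : ℝ) ≤ (4 * d + 3 : ℝ) ^ d :=
    one_le_pow₀ (by linarith [(Nat.cast_nonneg d : (0:ℝ) ≤ d)])
  set K : ℝ := (4 * d + 3 : ℝ) ^ d with hKdef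
  set L : ℝ := K * 2 ^ d with hL
  have hL1 : 1 ≤ L := one_le_mul_of_one_le_of_one_le hK (one_le_pow₀ (by norm_num))
  set m : ℝ := 1 / (2 * L) with hm
  have hm0 : 0 < m := by positivity
  have hm1 : m ≤ 1 / 2 := one_div_le_one_div_of_le (by norm_num) (by linarith)
  have hmL : L * m = 1 / 2 := by rw [hm]; field_simp
  refine ⟨2 * K, by positivity, 1 - m, by linarith, by linarith, ?_⟩
  rintro O ρ n w rfl hb hne hw hρ
  have hρ0 : 0 ≤ ρ := le_trans (by positivity) (hρ ∅ Bornology.isBounded_empty)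
  rcases O.eq_empty_or_nonempty with rfl | hO
  · refine ⟨0, 1, one_pos, ?_, by simp, by simp⟩
    simp only [Finset.coe_empty, Set.mem_empty_iff_false, false_and, Set.ofPred_false,
      Set.ncard_empty, Nat.cast_zero]
    positivity
  choose! p hp using hne
  have hρ1 : 1 ≤ ρ := by
    obtain ⟨o, ho⟩ := hO
    refine le_trans ?_ (hρ {p o} Bornology.isBounded_singleton)
    rw [← Nat.cast_one, Nat.cast_le, Nat.one_le_iff_ne_zero]
    apply Set.ncard_ne_zero_of_mem (a := o)
    · exact ⟨ho, ⟨p o, hp o ho, rfl⟩, by simp [Metric.diam_nonneg]⟩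
  set W := ∑ o ∈ O, w o with hW
  have hW0 : 0 ≤ W := Finset.sum_nonneg hw
  let wt : Set (EuclideanSpace ℝ (Fin d)) → ℝ := fun s => ∑ o ∈ O, if p o ∈ s then w o else 0
  -- if a set of heavy points avoids the condition, the remainder is small
  have hcomp : ∀ (s : Set (EuclideanSpace ℝ (Fin d))) (P : Set (EuclideanSpace ℝ (Fin d)) → Prop),
      m * W ≤ wt s → (∀ o ∈ O, P o → p o ∉ s) →
      (∑ o ∈ O, if P o then w o else 0) ≤ (1 - m) * W := by
    intro s P h1 h2
    have : (∑ o ∈ O, if P o then w o else 0) + wt s ≤ W := by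
      rw [← Finset.sum_add_distrib]
      refine Finset.sum_le_sum fun o ho => ?_
      have := hw o ho
      have h3 := h2 o ho
      by_cases hP : P o
      · simp [hP, h3 hP]
      · by_cases hs : p o ∈ s <;> simp [hP, hs, this]
    linarith
  have hwtmono : ∀ s t : Set (EuclideanSpace ℝ (Fin d)), (∀ o ∈ O, p o ∈ s → p o ∈ t) →
      wt s ≤ wt t := by
    intro s t h
    refine Finset.sum_le_sum fun o ho => ?_
    have := hw o ho
    have h3 := h o ho
    by_cases hs : p o ∈ s
    · simp [hs, h3 hs]
    · simp only [hs, if_false]; split_ifs <;> simp [this]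
  set Q := (O ×ˢ O).filter fun a => m * W ≤ wt (Metric.closedBall (p a.1) (dist (p a.1) (p a.2)))
    with hQ
  have hQne : Q.Nonempty := by
    obtain ⟨o, ho⟩ := hO
    obtain ⟨o', ho', hmax⟩ := O.exists_max_image (fun a => dist (p o) (p a)) ⟨o, ho⟩
    refine ⟨(o, o'), Finset.mem_filter.2 ⟨Finset.mk_mem_product ho ho', ?_⟩⟩
    have : wt (Metric.closedBall (p o) (dist (p o) (p o'))) = W := by
      refine Finset.sum_congr rfl fun a ha => ?_
      rw [if_pos]
      rw [Metric.mem_closedBall, dist_comm]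
      exact hmax a ha
    rw [this]
    nlinarith
  obtain ⟨⟨o₁, o₂⟩, hmem, hmin⟩ := Q.exists_min_image (fun a => dist (p a.1) (p a.2)) hQne
  rw [hQ, Finset.mem_filter, Finset.mem_product] at hmem
  obtain ⟨⟨ho₁, ho₂⟩, hheavy⟩ := hmem
  simp only at ho₁ ho₂ hheavy hmin
  set x := p o₁
  set r := dist x (p o₂) with hr
  have hrhs : 0 ≤ ρ ^ (1 / (d : ℝ)) * (O.card : ℝ) ^ (1 - 1 / (d : ℝ)) := by positivity
  rcases (show 0 ≤ r from dist_nonneg).eq_or_lt with hr0 | hr0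
  · rw [← hr0] at hheavy
    obtain ⟨ctr, R, hR, hx, hcard⟩ := degen_aux d hd O ρ hb hρ x
    rw [Metric.mem_sphere] at hx
    refine ⟨ctr, R, hR, ?_, ?_, ?_⟩
    · nlinarith
    · refine hcomp _ (fun o => o ⊆ Metric.ball ctr R) hheavy ?_
      intro o ho h1 h2
      rw [Metric.closedBall_zero, Set.mem_singleton_iff] at h2
      have := h1 (hp o ho)
      rw [h2, Metric.mem_ball] at this
      linarith
    · refine hcomp _ (fun o => Disjoint o (Metric.closedBall ctr R)) hheavy ?_
      intro o ho h1 h2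
      rw [Metric.closedBall_zero, Set.mem_singleton_iff] at h2
      refine Set.disjoint_left.1 h1 (hp o ho) ?_
      rw [h2, Metric.mem_closedBall]
      exact hx.le
  · obtain ⟨R, hR, hcard⟩ := sep_aux d hd O ρ hb hρ x r hr0
    refine ⟨x, R, by linarith [hR.1], hcard, ?_, ?_⟩
    · obtain ⟨g, T, hT, hg, hdist⟩ := cover_aux d hd x r (r / 2) (by linarith) (by linarith)
      have hTL : (T.card : ℝ) ≤ L := by
        have e : r / (r / 2) = 2 := by field_simp
        rwa [e] at hT
      have hfib : ∀ k, wt {y | g y = k} ≤ m * W := by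
        intro k
        by_cases hk : ∃ o ∈ O, g (p o) = k
        · obtain ⟨o, ho, hok⟩ := hk
          obtain ⟨o', ho', hmax⟩ := (O.filter fun a => g (p a) = k).exists_max_image
            (fun a => dist (p o) (p a)) ⟨o, Finset.mem_filter.2 ⟨ho, hok⟩⟩
          rw [Finset.mem_filter] at ho'
          have h1 : wt {y | g y = k} ≤ wt (Metric.closedBall (p o) (dist (p o) (p o'))) := by
            apply hwtmono
            intro a ha hak
            rw [Metric.mem_closedBall, dist_comm]
            exact hmax a (Finset.mem_filter.2 ⟨ha, hak⟩)
          refine h1.trans ?_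
          by_contra hcon
          have h2 := hmin (o, o') (Finset.mem_filter.2
            ⟨Finset.mk_mem_product ho ho'.1, (not_le.1 hcon).le⟩)
          have h3 := hdist (p o) (p o') (hok.trans ho'.2.symm)
          simp only at h2
          linarith
        · have : wt {y | g y = k} = 0 := by
            refine Finset.sum_eq_zero fun o ho => if_neg fun h => hk ⟨o, ho, h⟩
          rw [this]; positivity
      have h1 : (∑ o ∈ O, if o ⊆ Metric.ball x R then w o else 0) ≤ ∑ k ∈ T, wt {y | g y = k} := by
        simp only [wt]
        rw [Finset.sum_comm]
        refine Finset.sum_le_sum fun o ho => ?_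
        have hw' := hw o ho
        split_ifs with h
        · have hm := hg (p o) (Metric.mem_closedBall.2
            ((Metric.mem_ball.1 (h (hp o ho))).le.trans hR.2))
          refine le_trans ?_ (Finset.single_le_sum (fun k _ => ?_) hm)
          · exact (if_pos rfl).ge
          · split_ifs <;> simp [hw']
        · exact Finset.sum_nonneg fun k _ => by split_ifs <;> simp [hw']
      calc _ ≤ ∑ k ∈ T, wt {y | g y = k} := h1
        _ ≤ ∑ k ∈ T, m * W := Finset.sum_le_sum fun k _ => hfib k
        _ = T.card * (m * W) := by simp
        _ ≤ L * (m * W) := by gcongr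
        _ = 1 / 2 * W := by rw [← mul_assoc, hmL]
        _ ≤ (1 - m) * W := by gcongr; linarith
    · refine hcomp _ (fun o => Disjoint o (Metric.closedBall x R)) hheavy ?_
      intro o ho h1 h2
      exact Set.disjoint_left.1 h1 (hp o ho) (Metric.closedBall_subset_closedBall hR.1 h2)
end

section
/- Let G be a finite graph, let t, ℓ ≥ 1 be integers, let F be an (ℓ,t)-shallow packing of G, and let H be the induced packing graph of F. Then |E(H)| ≤ (2·(t+1)²·ℓ²·∇_t(G) + ℓ)·|V(H)|. -/
/-- The induced packing graph of a family `F` of vertex subsets of `G`: vertices are the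
members of `F` (with multiplicity, via the index type), with an edge between two members if
they share a vertex or some vertex of one is adjacent in `G` to a vertex of the other. -/
def PackingGraph {V I : Type*} (G : SimpleGraph V) (F : I → Set V) : SimpleGraph I :=
  SimpleGraph.fromRel fun i j =>
    (F i ∩ F j).Nonempty ∨ ∃ u ∈ F i, ∃ v ∈ F j, G.Adj u v

inductive Rch {V : Type} (G : SimpleGraph V) (S : Set V) (c : V) : ℕ → V → Prop
  | zero : c ∈ S → Rch G S c 0 c
  | succ {n u v} : Rch G S c n u → G.Adj u v → v ∈ S → Rch G S c (n + 1) v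

def RBall {V : Type} (G : SimpleGraph V) (S : Set V) (c : V) (t : ℕ) : Set V :=
  {v | ∃ n ≤ t, Rch G S c n v}

theorem Rch.mem {V : Type} {G : SimpleGraph V} {S : Set V} {c : V} {n : ℕ} {v : V}
    (h : Rch G S c n v) : v ∈ S := by
  cases h <;> assumption

theorem Rch.mem_c {V : Type} {G : SimpleGraph V} {S : Set V} {c : V} {n : ℕ} {v : V}
    (h : Rch G S c n v) : c ∈ S := by
  induction h <;> assumption

theorem Rch.mono {V : Type} {G : SimpleGraph V} {S T : Set V} {c : V} {n : ℕ} {v : V}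
    (h : Rch G S c n v) (hST : S ⊆ T) : Rch G T c n v := by
  induction h with
  | zero h => exact .zero (hST h)
  | succ _ ha hv ih => exact .succ ih ha (hST hv)

theorem Rch.finset {V : Type} {G : SimpleGraph V} {S : Set V} {c : V} {n : ℕ} {v : V}
    (h : Rch G S c n v) : ∃ Y : Finset V, Y.card ≤ n + 1 ∧ c ∈ Y ∧
      (∀ y ∈ Y, ∃ k ≤ n, Rch G S c k y) ∧ Rch G (Y : Set V) c n v := by
  classical
  induction h with
  | zero h => exact ⟨{c}, by simp, by simp, by
      intro y hy
      rw [Finset.mem_singleton] at hy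
      subst hy
      exact ⟨0, le_rfl, .zero h⟩, .zero (by simp)⟩
  | @succ n u v hu ha hv ih =>
    obtain ⟨Y, h1, h2, h3, h4⟩ := ih
    refine ⟨insert v Y, ?_, by simp [h2], ?_, .succ (h4.mono (by simp)) ha (by simp)⟩
    · have := Finset.card_insert_le v Y
      omega
    · intro y hy
      rcases Finset.mem_insert.1 hy with rfl | hy
      · exact ⟨n + 1, le_rfl, .succ hu ha hv⟩
      · obtain ⟨k, hk, hk'⟩ := h3 y hy
        exact ⟨k, by omega, hk'⟩

theorem rball_shallow {V : Type} {G : SimpleGraph V} {S : Set V} {c : V} {t : ℕ} (hc : c ∈ S) :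
    IsShallowGraph (G.induce (RBall G S c t)) t := by
  have hcB : c ∈ RBall G S c t := ⟨0, Nat.zero_le _, .zero hc⟩
  refine ⟨⟨c, hcB⟩, ?_⟩
  have key : ∀ n v, Rch G S c n v → n ≤ t → ∃ hv : v ∈ RBall G S c t,
      ∃ p : (G.induce (RBall G S c t)).Walk ⟨c, hcB⟩ ⟨v, hv⟩, p.length = n := by
    intro n v h
    induction h with
    | zero h => intro _; exact ⟨hcB, .nil, rfl⟩
    | @succ n u v hu ha hv ih =>
      intro hn
      obtain ⟨hu', p, hp⟩ := ih (by omega)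
      have hvB : v ∈ RBall G S c t := ⟨n + 1, hn, .succ hu ha hv⟩
      have : (G.induce (RBall G S c t)).Adj ⟨u, hu'⟩ ⟨v, hvB⟩ := by simpa using ha
      exact ⟨hvB, p.concat this, by simp [hp]⟩
  rintro ⟨v, n, hn, h⟩
  obtain ⟨_, p, hp⟩ := key n v h hn
  exact ⟨⟨p⟩, (SimpleGraph.dist_le p).trans (by omega)⟩

theorem shallow_rch {V : Type} {G : SimpleGraph V} {S : Set V} {t : ℕ}
    (h : IsShallowGraph (G.induce S) t) :
    ∃ c ∈ S, ∀ v ∈ S, ∃ n ≤ t, Rch G S c n v := by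
  obtain ⟨c, hc⟩ := h
  refine ⟨c, c.2, fun v hv => ?_⟩
  obtain ⟨hr, hd⟩ := hc ⟨v, hv⟩
  obtain ⟨p, hp⟩ := hr.exists_walk_length_eq_dist
  refine ⟨p.length, by omega, ?_⟩
  have key : ∀ n (a b : S) (p : (G.induce S).Walk a b), p.length = n → Rch G S a n b := by
    intro n
    induction n with
    | zero =>
      intro a b p hp
      have := SimpleGraph.Walk.eq_of_length_eq_zero hp
      subst this
      exact .zero a.2
    | succ n ih =>
      intro a b p hp
      obtain ⟨d, q, hq, h⟩ : ∃ d, ∃ q : (G.induce S).Walk a d, q.length = n ∧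
          (G.induce S).Adj d b := by
        refine ⟨p.penultimate, p.dropLast, ?_, p.adj_penultimate ?_⟩
        · simp [hp]
        · intro hn
          have := SimpleGraph.Walk.nil_iff_length_eq.1 hn
          omega
      exact .succ (ih _ _ q hq) (by simpa using h) b.2
  exact key _ _ _ p rfl

theorem directed_lem {V : Type} {G : SimpleGraph V} {A B : Set V} {t : ℕ} {a b : V}
    (hA : ∀ v ∈ A, ∃ n ≤ t, Rch G A a n v) (hB : ∀ v ∈ B, ∃ n ≤ t, Rch G B b n v)
    (hbA : b ∉ A) (h : (A ∩ B).Nonempty ∨ ∃ u ∈ A, ∃ v ∈ B, G.Adj u v) :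
    ∃ X : Finset V, X.card ≤ 2 * (t + 1) ∧ a ∈ X ∧ b ∈ X ∧
      ∀ S T : Set V, (∀ v ∈ X, v ∈ A → v ∈ S) → (∀ v ∈ X, v ∉ A → v ∈ B → v ∈ T) →
        ∃ u ∈ RBall G S a t, ∃ v ∈ RBall G T b t, G.Adj u v := by
  classical
  have main : ∃ u ∈ A, ∃ v, G.Adj u v ∧ ∃ m ≤ t, Rch G B b m v ∧
      ∀ k ≤ m, ∀ y, Rch G B b k y → y ∉ A := by
    by_cases hi : (A ∩ B).Nonempty
    · have hex : ∃ n, ∃ w ∈ A, Rch G B b n w := by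
        obtain ⟨w, hw, hw'⟩ := hi
        obtain ⟨n, _, hn⟩ := hB w hw'
        exact ⟨n, w, hw, hn⟩
      have hle : Nat.find hex ≤ t := by
        obtain ⟨w, hw, hw'⟩ := hi
        obtain ⟨n, hn, hn'⟩ := hB w hw'
        exact (Nat.find_min' hex ⟨w, hw, hn'⟩).trans hn
      have hmin := fun k => @Nat.find_min _ _ hex k
      obtain ⟨w, hw, hr⟩ := Nat.find_spec hex
      generalize Nat.find hex = N at *
      cases hr with
      | zero _ => exact absurd hw hbA
      | @succ m u _ hu ha hv =>
        refine ⟨w, hw, u, ha.symm, m, by omega, hu, ?_⟩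
        intro k hk y hy hyA
        exact hmin k (by omega) ⟨y, hyA, hy⟩
    · rcases h with h | ⟨u, hu, v, hv, ha⟩
      · exact absurd h hi
      · obtain ⟨m, hm, hr⟩ := hB v hv
        exact ⟨u, hu, v, ha, m, hm, hr, fun k _ y hy hyA => hi ⟨y, hyA, hy.mem⟩⟩
  obtain ⟨u, hu, v, ha, m, hm, hr, hav⟩ := main
  obtain ⟨n, hn, hru⟩ := hA u hu
  obtain ⟨Y, y1, y2, y3, y4⟩ := hru.finset
  obtain ⟨Z, z1, z2, z3, z4⟩ := hr.finset
  refine ⟨Y ∪ Z, ?_, by simp [y2], by simp [z2], ?_⟩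
  · have := Finset.card_union_le Y Z
    omega
  · intro S T hS hT
    refine ⟨u, ⟨n, hn, y4.mono ?_⟩, v, ⟨m, hm, z4.mono ?_⟩, ha⟩
    · intro y hy
      obtain ⟨k, _, hk⟩ := y3 y hy
      exact hS y (Finset.mem_union_left _ hy) hk.mem
    · intro y hy
      obtain ⟨k, hk, hk'⟩ := z3 y hy
      exact hT y (Finset.mem_union_right _ hy) (hav k hk y hk') hk'.mem

def FirstTwo {I : Type} {N : ℕ} (K : Finset I) (i j : I) (σ : I ≃ Fin N) : Prop :=
  σ i < σ j ∧ ∀ k ∈ K, k ≠ i → σ j ≤ σ k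

open Classical in
theorem perm_count {I : Type} [Fintype I] {N : ℕ} (K : Finset I) {i j : I} (hi : i ∈ K)
    (hj : j ∈ K) (hij : i ≠ j) :
    Fintype.card (I ≃ Fin N) ≤
      K.card ^ 2 * (Finset.univ.filter (fun σ : I ≃ Fin N => FirstTwo K i j σ)).card := by
  have hcov : (Finset.univ : Finset (I ≃ Fin N)) ⊆ K.offDiag.biUnion
      (fun p => Finset.univ.filter (fun σ : I ≃ Fin N => FirstTwo K p.1 p.2 σ)) := by
    intro σ _
    obtain ⟨a, ha, hamin⟩ := Finset.exists_min_image K σ ⟨i, hi⟩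
    have hne : (K.erase a).Nonempty := by
      by_cases h : a = i
      · exact ⟨j, Finset.mem_erase.2 ⟨by rw [h]; exact hij.symm, hj⟩⟩
      · exact ⟨i, Finset.mem_erase.2 ⟨fun h' => h h'.symm, hi⟩⟩
    obtain ⟨b, hb, hbmin⟩ := Finset.exists_min_image (K.erase a) σ hne
    rw [Finset.mem_erase] at hb
    simp only [Finset.mem_biUnion, Finset.mem_filter, Finset.mem_univ, true_and]
    refine ⟨(a, b), by simp [ha, hb.2, hb.1.symm], ?_, ?_⟩
    · exact lt_of_le_of_ne (hamin b hb.2) (fun h => hb.1 (σ.injective h).symm)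
    · intro k hk hka
      exact hbmin k (Finset.mem_erase.2 ⟨hka, hk⟩)
  have hcard : ∀ p ∈ K.offDiag,
      (Finset.univ.filter (fun σ : I ≃ Fin N => FirstTwo K p.1 p.2 σ)).card ≤
      (Finset.univ.filter (fun σ : I ≃ Fin N => FirstTwo K i j σ)).card := by
    rintro ⟨a, b⟩ hp
    rw [Finset.mem_offDiag] at hp
    obtain ⟨ha, hb, hab⟩ := hp
    simp only at ha hb hab
    obtain ⟨π, hπi, hπj, hπK⟩ : ∃ π : Equiv.Perm I, π i = a ∧ π j = b ∧ ∀ k ∈ K, π k ∈ K := by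
      have hsw : ∀ x ∈ K, ∀ y ∈ K, ∀ k ∈ K, Equiv.swap x y k ∈ K := by
        intro x hx y hy k hk
        rw [Equiv.swap_apply_def]
        split_ifs <;> assumption
      refine ⟨(Equiv.swap i a).trans (Equiv.swap (Equiv.swap i a j) b), ?_, ?_, ?_⟩
      · simp only [Equiv.trans_apply, Equiv.swap_apply_left]
        apply Equiv.swap_apply_of_ne_of_ne _ hab
        intro h
        have : Equiv.swap i a i = Equiv.swap i a j := by rw [← h]; simp
        exact hij ((Equiv.swap i a).injective this)
      · simp
      · intro k hk
        exact hsw _ (hsw _ hi _ ha _ hj) _ hb _ (hsw _ hi _ ha _ hk)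
    apply Finset.card_le_card_of_injOn (fun σ => π.trans σ)
    · intro σ hσ
      simp only [Finset.coe_filter, Finset.mem_univ, true_and, Set.mem_ofPred_eq] at hσ ⊢
      refine ⟨by simpa [hπi, hπj] using hσ.1, ?_⟩
      intro k hk hki
      have := hσ.2 (π k) (hπK k hk) (by rw [← hπi]; exact fun h => hki (π.injective h))
      simpa [hπj] using this
    · intro σ _ τ _ h
      ext x
      have := congrArg (fun f : I ≃ Fin N => f (π.symm x)) h
      simp at this
      rw [this]
  calc Fintype.card (I ≃ Fin N) = (Finset.univ : Finset (I ≃ Fin N)).card := rfl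
    _ ≤ _ := Finset.card_le_card hcov
    _ ≤ _ := Finset.card_biUnion_le_card_mul _ _ _ hcard
    _ ≤ _ := by
      apply Nat.mul_le_mul_right
      rw [Finset.offDiag_card, sq]
      omega

def Own {V I : Type} {N : ℕ} (F : I → Set V) (σ : I ≃ Fin N) (i : I) : Set V :=
  {v | v ∈ F i ∧ ∀ k, v ∈ F k → σ i ≤ σ k}

open Classical in
theorem sigma_bound {V I : Type} [Fintype I] (G : SimpleGraph V) {N t : ℕ}
    (F : I → Set V) (x : ℝ) (hx0 : 0 ≤ x) (hx : NablaLE G t x) (c : I → V) (σ : I ≃ Fin N)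
    (P : Finset (I × I))
    (hP : ∀ p ∈ P, σ p.1 < σ p.2 ∧ c p.1 ∈ Own F σ p.1 ∧ c p.2 ∈ Own F σ p.2 ∧
      ∃ u ∈ RBall G (Own F σ p.1) (c p.1) t, ∃ v ∈ RBall G (Own F σ p.2) (c p.2) t, G.Adj u v) :
    (P.card : ℝ) ≤ x * Fintype.card I := by
  let W := {i : I // c i ∈ Own F σ i}
  let cl : W → Set V := fun w => RBall G (Own F σ w.1) (c w.1) t
  let M : SimpleGraph W := SimpleGraph.fromRel (fun a b => ∃ u ∈ cl a, ∃ v ∈ cl b, G.Adj u v)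
  have hM : IsShallowMinor G M t := by
    refine ⟨cl, ?_, fun w => rball_shallow w.2, ?_⟩
    · intro w w' hww
      rw [Set.disjoint_left]
      rintro v ⟨n, _, h⟩ ⟨n', _, h'⟩
      apply hww
      apply Subtype.ext
      apply σ.injective
      exact le_antisymm (h.mem.2 _ h'.mem.1) (h'.mem.2 _ h.mem.1)
    · rintro w w' ⟨_, h | ⟨u, hu, v, hv, ha⟩⟩
      · exact h
      · exact ⟨v, hv, u, hu, ha.symm⟩
  have h1 := hx W M hM
  have h2 : P.card ≤ M.edgeSet.ncard := by
    have hinj : (P.image (fun p => s(p.1, p.2))).card = P.card := by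
      apply Finset.card_image_of_injOn
      rintro ⟨a, b⟩ hp ⟨a', b'⟩ hq h
      have h3 := (hP _ hp).1
      have h4 := (hP _ hq).1
      simp only [Sym2.eq_iff] at h h3 h4
      rcases h with ⟨rfl, rfl⟩ | ⟨rfl, rfl⟩
      · rfl
      · exact absurd h3 (not_lt.2 h4.le)
    rw [← hinj, ← Set.ncard_coe_finset]
    refine (Set.ncard_le_ncard (t := Sym2.map Subtype.val '' M.edgeSet) ?_ (Set.toFinite _)).trans
      (Set.ncard_image_le (Set.toFinite _))
    intro e he
    simp only [Finset.coe_image, Set.mem_image, Finset.mem_coe] at he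
    obtain ⟨⟨a, b⟩, hp, rfl⟩ := he
    obtain ⟨hlt, ha, hb, hadj⟩ := hP _ hp
    refine ⟨s(⟨a, ha⟩, ⟨b, hb⟩), ?_, rfl⟩
    rw [SimpleGraph.mem_edgeSet]
    refine ⟨?_, Or.inl hadj⟩
    intro h
    have : a = b := congrArg Subtype.val h
    subst this
    exact lt_irrefl _ hlt
  have h3 : (Fintype.card W : ℝ) ≤ Fintype.card I := by
    exact_mod_cast Fintype.card_subtype_le _
  calc (P.card : ℝ) ≤ M.edgeSet.ncard := by exact_mod_cast h2
    _ ≤ _ := h1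
    _ ≤ _ := by gcongr

/-- for an `(ℓ,t)`-shallow packing `F` of a finite graph `G`, the induced
packing graph `H` satisfies `|E(H)| ≤ (2(t+1)²ℓ²∇_t(G) + ℓ)·|V(H)|`. -/
theorem stmt12 {V I : Type} [Fintype V] [Fintype I] (G : SimpleGraph V)
    (t ℓ : ℕ) (ht : 1 ≤ t) (hℓ : 1 ≤ ℓ) (F : I → Set V)
    (hshallow : ∀ i, IsShallowGraph (G.induce (F i)) t)
    (hpack : ∀ v : V, ({i | v ∈ F i}).ncard ≤ ℓ)
    (x : ℝ) (hx : NablaLE G t x) :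
    ((PackingGraph G F).edgeSet.ncard : ℝ) ≤
      (2 * ((t : ℝ) + 1) ^ 2 * (ℓ : ℝ) ^ 2 * x + (ℓ : ℝ)) * (Fintype.card I : ℝ) := by
  classical
  rcases isEmpty_or_nonempty I with hI | ⟨⟨i0⟩⟩
  · have : (PackingGraph G F).edgeSet = ∅ := Set.eq_empty_of_isEmpty _
    simp [this]
  have hx0 : 0 ≤ x := by
    have := hx Unit ⊥ ⟨fun _ => F i0, fun a b h => absurd rfl h, fun _ => hshallow i0,
      fun _ _ h => absurd h (by simp)⟩
    simpa using this
  choose c hcF hc using fun i => shallow_rch (hshallow i)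
  let Rel : I → I → Prop := fun i j => (F i ∩ F j).Nonempty ∨ ∃ u ∈ F i, ∃ v ∈ F j, G.Adj u v
  have hsymm : ∀ i j, Rel i j → Rel j i := by
    rintro i j (h | ⟨u, hu, v, hv, ha⟩)
    · exact Or.inl (by rwa [Set.inter_comm])
    · exact Or.inr ⟨v, hv, u, hu, ha.symm⟩
  let Gd : SimpleGraph I :=
    { Adj := fun i j => i ≠ j ∧ Rel i j ∧ c i ∉ F j ∧ c j ∉ F i
      symm := ⟨fun i j h => ⟨h.1.symm, hsymm _ _ h.2.1, h.2.2.2, h.2.2.1⟩⟩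
      loopless := ⟨fun i h => h.1 rfl⟩ }
  let Bd : Finset (I × I) := Finset.univ.filter (fun p => c p.1 ∈ F p.2)
  have hBd : Bd.card ≤ ℓ * Fintype.card I := by
    have : Bd ⊆ Finset.univ.biUnion
        (fun i => (Finset.univ.filter (fun j => c i ∈ F j)).image (fun j => (i, j))) := by
      rintro ⟨i, j⟩ h
      simpa [Bd] using h
    refine (Finset.card_le_card this).trans ?_
    rw [mul_comm]
    refine Finset.card_biUnion_le_card_mul _ _ _ fun i _ => ?_
    refine Finset.card_image_le.trans ?_
    have h := hpack (c i)
    rwa [Set.ncard_eq_toFinset_card', Set.toFinset_setOf] at h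
  have hE : (PackingGraph G F).edgeSet.ncard ≤ Gd.edgeFinset.card + Bd.card := by
    have hsub : (PackingGraph G F).edgeSet ⊆
        ((Gd.edgeFinset ∪ Bd.image (fun p => s(p.1, p.2)) : Finset (Sym2 I)) : Set (Sym2 I)) := by
      intro e
      induction e with | _ i j => ?_
      intro h
      rw [SimpleGraph.mem_edgeSet] at h
      obtain ⟨hne, h⟩ := h
      have hR : Rel i j := h.elim id (hsymm _ _)
      rw [Finset.mem_coe, Finset.mem_union]
      by_cases h1 : c i ∈ F j
      · right
        exact Finset.mem_image.2 ⟨(i, j), by simp [Bd, h1], rfl⟩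
      by_cases h2 : c j ∈ F i
      · right
        exact Finset.mem_image.2 ⟨(j, i), by simp [Bd, h2], Sym2.eq_swap⟩
      left
      rw [SimpleGraph.mem_edgeFinset, SimpleGraph.mem_edgeSet]
      exact ⟨hne, hR, h1, h2⟩
    refine (Set.ncard_le_ncard hsub (Set.toFinite _)).trans ?_
    rw [Set.ncard_coe_finset]
    exact (Finset.card_union_le _ _).trans (Nat.add_le_add_left Finset.card_image_le _)
  -- ordered good pairs
  let D : Finset (I × I) := Finset.univ.filter (fun p => Gd.Adj p.1 p.2)
  have hD : D.card = 2 * Gd.edgeFinset.card := by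
    rw [← SimpleGraph.sum_degrees_eq_twice_card_edges]
    have : D = (Finset.univ.sigma (fun i => Gd.neighborFinset i)).map
        (Equiv.sigmaEquivProd I I).toEmbedding := by
      ext ⟨i, j⟩
      simp [D]
    rw [this, Finset.card_map, Finset.card_sigma]
    simp
  have hX : ∀ p : I × I, ∃ X : Finset V, Gd.Adj p.1 p.2 → X.card ≤ 2 * (t + 1) ∧ c p.1 ∈ X ∧
      c p.2 ∈ X ∧ ∀ S T : Set V, (∀ v ∈ X, v ∈ F p.1 → v ∈ S) →
        (∀ v ∈ X, v ∉ F p.1 → v ∈ F p.2 → v ∈ T) →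
        ∃ u ∈ RBall G S (c p.1) t, ∃ v ∈ RBall G T (c p.2) t, G.Adj u v := by
    intro p
    by_cases h : Gd.Adj p.1 p.2
    · obtain ⟨X, hX⟩ := directed_lem (hc p.1) (hc p.2) h.2.2.2 h.2.1
      exact ⟨X, fun _ => hX⟩
    · exact ⟨∅, fun h' => absurd h' h⟩
  choose X hX using hX
  let K : I × I → Finset I := fun p => (X p).biUnion (fun v => Finset.univ.filter (fun k => v ∈ F k))
  have hK : ∀ p k, k ∈ K p ↔ ∃ v ∈ X p, v ∈ F k := by
    intro p k
    simp [K]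
  have hKcard : ∀ p ∈ D, (K p).card ≤ 2 * (t + 1) * ℓ := by
    intro p hp
    have hp' : Gd.Adj p.1 p.2 := by simpa [D] using hp
    refine (Finset.card_biUnion_le_card_mul _ _ ℓ fun v _ => ?_).trans
      (Nat.mul_le_mul_right _ (hX p hp').1)
    have h := hpack v
    rwa [Set.ncard_eq_toFinset_card', Set.toFinset_setOf] at h
  let N := Fintype.card I
  have hlow : ∀ p ∈ D, Fintype.card (I ≃ Fin N) ≤ (2 * (t + 1) * ℓ) ^ 2 *
      (Finset.univ.filter (fun σ : I ≃ Fin N => FirstTwo (K p) p.1 p.2 σ)).card := by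
    intro p hp
    have hp' : Gd.Adj p.1 p.2 := by simpa [D] using hp
    obtain ⟨_, h1, h2, _⟩ := hX p hp'
    refine (perm_count (K p) ((hK _ _).2 ⟨_, h1, hcF _⟩) ((hK _ _).2 ⟨_, h2, hcF _⟩) hp'.1).trans ?_
    exact Nat.mul_le_mul_right _ (Nat.pow_le_pow_left (hKcard p hp) 2)
  have hup : ∀ σ : I ≃ Fin N, ((D.filter (fun p => FirstTwo (K p) p.1 p.2 σ)).card : ℝ) ≤
      x * Fintype.card I := by
    intro σ
    refine sigma_bound G F x hx0 hx c σ _ ?_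
    intro p hp
    rw [Finset.mem_filter] at hp
    obtain ⟨hp, hlt, hF⟩ := hp
    have hp' : Gd.Adj p.1 p.2 := by simpa [D] using hp
    obtain ⟨_, h1, h2, h3⟩ := hX p hp'
    have hS : ∀ v ∈ X p, v ∈ F p.1 → v ∈ Own F σ p.1 := by
      intro v hv hv1
      refine ⟨hv1, fun k hk => ?_⟩
      by_cases hk1 : k = p.1
      · rw [hk1]
      · exact hlt.le.trans (hF k ((hK _ _).2 ⟨v, hv, hk⟩) hk1)
    have hT : ∀ v ∈ X p, v ∉ F p.1 → v ∈ F p.2 → v ∈ Own F σ p.2 := by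
      intro v hv hv1 hv2
      refine ⟨hv2, fun k hk => hF k ((hK _ _).2 ⟨v, hv, hk⟩) ?_⟩
      rintro rfl
      exact hv1 hk
    exact ⟨hlt, hS _ h1 (hcF _), hT _ h2 hp'.2.2.2 (hcF _), h3 _ _ hS hT⟩
  have hdc : ∑ p ∈ D, (Finset.univ.filter (fun σ : I ≃ Fin N => FirstTwo (K p) p.1 p.2 σ)).card =
      ∑ σ : I ≃ Fin N, (D.filter (fun p => FirstTwo (K p) p.1 p.2 σ)).card :=
    Finset.sum_card_bipartiteAbove_eq_sum_card_bipartiteBelow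
      (s := D) (t := Finset.univ) (fun p (σ : I ≃ Fin N) => FirstTwo (K p) p.1 p.2 σ)
  have hA : D.card * Fintype.card (I ≃ Fin N) ≤ (2 * (t + 1) * ℓ) ^ 2 *
      ∑ σ : I ≃ Fin N, (D.filter (fun p => FirstTwo (K p) p.1 p.2 σ)).card := by
    rw [← hdc, Finset.mul_sum, ← smul_eq_mul]
    exact Finset.card_nsmul_le_sum _ _ _ hlow
  have hB : ((∑ σ : I ≃ Fin N, (D.filter (fun p => FirstTwo (K p) p.1 p.2 σ)).card : ℕ) : ℝ) ≤
      Fintype.card (I ≃ Fin N) * (x * Fintype.card I) := by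
    push_cast
    have := Finset.sum_le_card_nsmul Finset.univ _ _ (fun σ _ => hup σ)
    simpa [nsmul_eq_mul] using this
  have hpos : (0 : ℝ) < Fintype.card (I ≃ Fin N) := by
    have : Nonempty (I ≃ Fin N) := ⟨Fintype.equivFin I⟩
    exact_mod_cast Fintype.card_pos
  have hDr : (D.card : ℝ) ≤ (2 * (t + 1) * ℓ) ^ 2 * (x * Fintype.card I) := by
    have hA' : (D.card : ℝ) * Fintype.card (I ≃ Fin N) ≤ (2 * (t + 1) * ℓ) ^ 2 *
      ((∑ σ : I ≃ Fin N, (D.filter (fun p => FirstTwo (K p) p.1 p.2 σ)).card : ℕ) : ℝ) := by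
      exact_mod_cast hA
    have hpos2 : (0 : ℝ) ≤ (2 * (t + 1) * ℓ) ^ 2 := by positivity
    have := hA'.trans (mul_le_mul_of_nonneg_left hB hpos2)
    refine le_of_mul_le_mul_right (this.trans (le_of_eq ?_)) hpos
    ring
  have hD' : (D.card : ℝ) = 2 * Gd.edgeFinset.card := by exact_mod_cast hD
  have hE' : ((PackingGraph G F).edgeSet.ncard : ℝ) ≤ Gd.edgeFinset.card + Bd.card := by
    exact_mod_cast hE
  have hBd' : (Bd.card : ℝ) ≤ ℓ * Fintype.card I := by exact_mod_cast hBd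
  nlinarith
end
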